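/- Let N ≅ ℤ^d be a lattice, let 𝒜 = {v_1,...,v_k} ⊂ N generate N as a group with deg(v_i) = 1 for a group homomorphism deg : N → ℤ, let Δ = conv(𝒜), K the cone over Δ, and let Σ be a simplicial fan induced by a regular triangulation of Δ with support K and all rays generated by elements of 𝒜. Then the quotients ℂ[𝚺]/Z·ℂ[𝚺], ℂ[𝚺;χ]/Z·ℂ[𝚺;χ], and ℂ[𝚺;χ]_ξ/Z·ℂ[𝚺;χ]_ξ (for any χ, ξ ∈ N⊗ℝ) are ℂ-vector spaces of dimension equal to the normalized volume of Δ, where Z = (Z_1,...,Z_d) with Z_j = Σ_{i ∈ I(𝚺)} g_j(v_i)[v_i] for a basis (g_1,...,g_d) of M = Hom(N,ℤ). -/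

import Mathlib

namespace GKZpaper

/-- The real cone spanned by the vectors `v i`, `i ∈ I`. -/
def realCone {d k : ℕ} (v : Fin k → Fin d → ℤ) (I : Finset (Fin k)) : Set (Fin d → ℝ) :=
  {x | ∃ c : Fin k → ℝ, (∀ i, 0 ≤ c i) ∧ (∀ i, i ∉ I → c i = 0) ∧
    ∀ j, x j = ∑ i, c i * (v i j : ℝ)}

/-- A (combinatorial model of a) rational simplicial fan together with the marked
lattice vectors `v i`; cones are recorded by the index sets of their generators. -/
structure StackyFan (d k : ℕ) where
  v : Fin k → Fin d → ℤ
  cones : Finset (Finset (Fin k))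
  empty_mem : ∅ ∈ cones
  downClosed : ∀ I ∈ cones, ∀ J ⊆ I, J ∈ cones
  simplicial : ∀ I ∈ cones,
    LinearIndependent ℝ (fun i : I => (fun j => (v i j : ℝ) : Fin d → ℝ))
  inter : ∀ I ∈ cones, ∀ J ∈ cones, realCone v I ∩ realCone v J = realCone v (I ∩ J)

variable {d k : ℕ}

/-- Every `v i` generates a ray of the fan. -/
def HasAllRays (F : StackyFan d k) : Prop := ∀ i, {i} ∈ F.cones

/-- The support of the fan. -/
def support (F : StackyFan d k) : Set (Fin d → ℝ) := ⋃ I ∈ F.cones, realCone F.v I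

/-- Maximal cones. -/
def IsMaxCone (F : StackyFan d k) (I : Finset (Fin k)) : Prop :=
  I ∈ F.cones ∧ ∀ J ∈ F.cones, I ⊆ J → J = I

def intPt {d : ℕ} (n : Fin d → ℤ) : Fin d → ℝ := fun j => (n j : ℝ)

/-- `Bx(σ;β)` for a complex parameter `β`: tuples `α` with `∑ αᵢ vᵢ ∈ N + β`,
`0 ≤ Re αᵢ < 1`, supported on `I`. -/
def BxCone (F : StackyFan d k) (β : Fin d → ℂ) (I : Finset (Fin k)) : Set (Fin k → ℂ) :=
  {α | (∀ i, 0 ≤ (α i).re ∧ (α i).re < 1) ∧ (∀ i, i ∉ I → α i = 0) ∧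
    ∃ n : Fin d → ℤ, ∀ j, ∑ i, α i * (F.v i j : ℂ) = (n j : ℂ) + β j}

/-- `Bx(𝚺;β)`: the union over the maximal cones. -/
def Bx (F : StackyFan d k) (β : Fin d → ℂ) : Set (Fin k → ℂ) :=
  {α | ∃ I, IsMaxCone F I ∧ α ∈ BxCone F β I}

/-- Real version of `Bx(σ;γ)`. -/
def BxConeR (F : StackyFan d k) (γ : Fin d → ℝ) (I : Finset (Fin k)) : Set (Fin k → ℝ) :=
  {a | (∀ i, 0 ≤ a i ∧ a i < 1) ∧ (∀ i, i ∉ I → a i = 0) ∧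
    ∃ n : Fin d → ℤ, ∀ j, ∑ i, a i * (F.v i j : ℝ) = (n j : ℝ) + γ j}

def BxR (F : StackyFan d k) (γ : Fin d → ℝ) : Set (Fin k → ℝ) :=
  {a | ∃ I, IsMaxCone F I ∧ a ∈ BxConeR F γ I}

/-- `Box(σ;γ) ⊂ N ⊗ ℝ` for a real parameter `γ`. -/
def BoxCone (F : StackyFan d k) (γ : Fin d → ℝ) (I : Finset (Fin k)) : Set (Fin d → ℝ) :=
  {c | (∃ n : Fin d → ℤ, ∀ j, c j = (n j : ℝ) + γ j) ∧
    ∃ a ∈ BxConeR F γ I, ∀ j, c j = ∑ i, a i * (F.v i j : ℝ)}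

def Box (F : StackyFan d k) (γ : Fin d → ℝ) : Set (Fin d → ℝ) :=
  {c | ∃ I, IsMaxCone F I ∧ c ∈ BoxCone F γ I}

/-- `I` is the minimal cone of the fan containing the point `x`. -/
def IsMinConeAt (F : StackyFan d k) (x : Fin d → ℝ) (I : Finset (Fin k)) : Prop :=
  I ∈ F.cones ∧ x ∈ realCone F.v I ∧ ∀ J ∈ F.cones, x ∈ realCone F.v J → I ⊆ J

/-- `w ∈ ∑ αᵢ vᵢ + ∑_{i ∈ I} ℤ₊ vᵢ`. -/
def shiftMem (F : StackyFan d k) (I : Finset (Fin k)) (α : Fin k → ℂ) (w : Fin d → ℂ) : Prop :=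
  ∃ m : Fin k → ℕ, (∀ i, i ∉ I → m i = 0) ∧
    ∀ j, w j = ∑ i, (α i + (m i : ℂ)) * (F.v i j : ℂ)

/-- Indexing set for the basis `[n+β, α]` of the deformed module `ℤ[𝚺;β]` (Definition 2). -/
def DefBasis (F : StackyFan d k) (β : Fin d → ℂ) : Set ((Fin d → ℂ) × (Fin k → ℂ)) :=
  {p | (∃ n : Fin d → ℤ, ∀ j, p.1 j = (n j : ℂ) + β j) ∧
    ∃ I, IsMaxCone F I ∧ p.2 ∈ BxCone F β I ∧ shiftMem F I p.2 p.1}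

/-- The defining condition for `[n'] ⬝ [n+β,α] = [n'+n+β,α']` via the maximal cone `I`. -/
def ActRelVia (F : StackyFan d k) (β : Fin d → ℂ) (I : Finset (Fin k)) (n' : Fin d → ℤ)
    (p p' : (Fin d → ℂ) × (Fin k → ℂ)) : Prop :=
  IsMaxCone F I ∧ intPt n' ∈ realCone F.v I ∧
    p.2 ∈ BxCone F β I ∧ shiftMem F I p.2 p.1 ∧
    p'.2 ∈ BxCone F β I ∧ shiftMem F I p'.2 p'.1 ∧
    ∀ j, p'.1 j = (n' j : ℂ) + p.1 j

/-- `[n'] ⬝ [n+β,α] = [n'+n+β,α']` (the product is nonzero with value `p'`). -/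
def ActRel (F : StackyFan d k) (β : Fin d → ℂ) (n' : Fin d → ℤ)
    (p p' : (Fin d → ℂ) × (Fin k → ℂ)) : Prop :=
  ∃ I, ActRelVia F β I n' p p'

/-- `Re β + δ Im β`, as a real vector. -/
def reDeform (β : Fin d → ℂ) (δ : ℝ) : Fin d → ℝ := fun j => (β j).re + δ * (β j).im

/-- `Re β + δ Im β`, regarded inside `N ⊗ ℂ`. -/
def reDeformC (β : Fin d → ℂ) (δ : ℝ) : Fin d → ℂ := fun j => ((β j).re + δ * (β j).im : ℝ)

end GKZpaper

namespace GKZpaper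

variable {d k : ℕ}

/-- The cone `K ⊂ N ⊗ ℝ` over `Δ = conv(𝒜)`: the nonnegative span of the `vᵢ`. -/
def Kcone (v : Fin k → Fin d → ℤ) : Set (Fin d → ℝ) :=
  {x | ∃ c : Fin k → ℝ, (∀ i, 0 ≤ c i) ∧ ∀ j, x j = ∑ i, c i * (v i j : ℝ)}

/-- `I(𝚺)`: the indices `i` such that `vᵢ` generates a ray of the fan. -/
def raysIdx (F : StackyFan d k) : Set (Fin k) := {i | {i} ∈ F.cones}

/-- The lattice points of `K`. -/
def latticeK (v : Fin k → Fin d → ℤ) : Set (Fin d → ℤ) := {n | intPt n ∈ Kcone v}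

/-- The setting of §4: `𝒜 = {v₁,…,v_k}` generates `N` as a group, `deg(vᵢ) = 1` for a
homomorphism `deg : N → ℤ`, and `Σ` is a fan coming from a regular triangulation of
`Δ = conv 𝒜`, with support `K` and rays among the `vᵢ`. -/
structure GKZSetting (d k : ℕ) where
  F : StackyFan d k
  deg : (Fin d → ℤ) →ₗ[ℤ] ℤ
  hdeg : ∀ i, deg (F.v i) = 1
  hgen : Submodule.span ℤ (Set.range F.v) = ⊤
  hsupp : support F = Kcone F.v
  /-- regularity of the triangulation: a convex piecewise linear support function,
  linear exactly on the maximal cones. -/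
  hreg : ∃ η : (Fin d → ℝ) → ℝ, ConvexOn ℝ (Kcone F.v) η ∧
    ∀ I, IsMaxCone F I → ∃ L : (Fin d → ℝ) →ₗ[ℝ] ℝ,
      (∀ x ∈ realCone F.v I, η x = L x) ∧
      ∀ x ∈ Kcone F.v, x ∉ realCone F.v I → L x < η x

/-- The set `L(α,v)` of Definition 4.3: tuples `l` with `∑ lᵢ vᵢ = β - v` and
`lᵢ - αᵢ ∈ ℤ` for all `i`. -/
def Lset (v : Fin k → Fin d → ℤ) (β : Fin d → ℂ) (α : Fin k → ℂ) (w : Fin d → ℤ) :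
    Set (Fin k → ℂ) :=
  {l | (∀ j, ∑ i, l i * (v i j : ℂ) = β j - (w j : ℂ)) ∧ ∀ i, ∃ z : ℤ, l i - α i = (z : ℂ)}

/-- The generating points of the shadow module `ℂ[𝚺;χ]_ξ`: the points `w = n + χ` of `K`
with `w + εξ ∈ K` for all sufficiently small `ε > 0`. -/
def ShadowPts (F : StackyFan d k) (χ ξ : Fin d → ℝ) : Set (Fin d → ℝ) :=
  {w | (∃ n : Fin d → ℤ, ∀ j, w j = (n j : ℝ) + χ j) ∧ w ∈ Kcone F.v ∧
    ∃ ε₀ : ℝ, 0 < ε₀ ∧ ∀ ε : ℝ, 0 < ε → ε ≤ ε₀ →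
      (fun j => w j + ε * ξ j) ∈ Kcone F.v}

/-- `Re β`. -/
def rePt (β : Fin d → ℂ) : Fin d → ℝ := fun j => (β j).re

end GKZpaper

namespace GKZpaper

variable {d k : ℕ}

/-- Two lattice points lie in a common cone of the fan. -/
def commonCone (F : StackyFan d k) (x y : Fin d → ℝ) : Prop :=
  ∃ I ∈ F.cones, x ∈ realCone F.v I ∧ y ∈ realCone F.v I

/-- The polynomial ring on the generators `[n]`, `n ∈ K ∩ N`, presenting `R = ℂ[𝚺]`. -/
abbrev FreeA (v : Fin k → Fin d → ℤ) := MvPolynomial ↥(latticeK v) ℂ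

/-- The defining relations of the deformed semigroup ring `ℂ[𝚺]`:
`[a]⬝[b] = [a+b]` when `a, b` lie in a common cone of `Σ`, `[a]⬝[b] = 0` otherwise,
and `[0] = 1`. -/
def relR (F : StackyFan d k) : Set (FreeA F.v) :=
  {p | ∃ a b c : ↥(latticeK F.v),
      commonCone F (intPt ↑a) (intPt ↑b) ∧ ((c : Fin d → ℤ) = ↑a + ↑b) ∧
      p = MvPolynomial.X a * MvPolynomial.X b - MvPolynomial.X c} ∪
  {p | ∃ a b : ↥(latticeK F.v), ¬ commonCone F (intPt ↑a) (intPt ↑b) ∧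
      p = MvPolynomial.X a * MvPolynomial.X b} ∪
  {p | ∃ z : ↥(latticeK F.v), ((z : Fin d → ℤ) = 0) ∧ p = MvPolynomial.X z - 1}

/-- The deformed semigroup ring `R = ℂ[𝚺]`, by generators and relations. -/
abbrev Rring (F : StackyFan d k) := FreeA F.v ⧸ Ideal.span (relR F)

/-- The element `[n]` of `R = ℂ[𝚺]`. -/
noncomputable def Rgen (F : StackyFan d k) (n : ↥(latticeK F.v)) : Rring F :=
  Ideal.Quotient.mk _ (MvPolynomial.X n)

lemma v_mem_latticeK (v : Fin k → Fin d → ℤ) (i : Fin k) : v i ∈ latticeK v := by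
  refine ⟨fun i' => if i' = i then 1 else 0, fun i' => by positivity, fun j => ?_⟩
  simp [intPt, ite_mul, Finset.sum_ite_eq']

/-- The element `Z_g = ∑_{i ∈ I(𝚺)} g(vᵢ)[vᵢ] ∈ R`. -/
noncomputable def Zelt (F : StackyFan d k) (g : (Fin d → ℤ) →ₗ[ℤ] ℤ) : Rring F :=
  letI := Classical.propDecidable
  ∑ i, if i ∈ raysIdx F then
    (algebraMap ℂ (Rring F) ((g (F.v i) : ℤ) : ℂ)) * Rgen F ⟨F.v i, v_mem_latticeK F.v i⟩
  else 0

/-- The lattice points indexing the basis `[n+χ]` of `ℂ[𝚺;χ]`. -/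
def Ppts (v : Fin k → Fin d → ℤ) (χ : Fin d → ℝ) : Set (Fin d → ℤ) :=
  {n | (fun j => (n j : ℝ) + χ j) ∈ Kcone v}

/-- The free `R`-module on the symbols `[n+χ]`. -/
abbrev MfreeR (F : StackyFan d k) (χ : Fin d → ℝ) := ↥(Ppts F.v χ) →₀ Rring F

/-- The defining relations of the `R`-module `ℂ[𝚺;χ]`: `[a]⬝[w] = [a+w]` if `a` and `w`
lie in a common cone, and `[a]⬝[w] = 0` otherwise. -/
def relM (F : StackyFan d k) (χ : Fin d → ℝ) : Set (MfreeR F χ) :=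
  {x | ∃ (a : ↥(latticeK F.v)) (w w' : ↥(Ppts F.v χ)),
      commonCone F (intPt ↑a) (fun j => ((w : Fin d → ℤ) j : ℝ) + χ j) ∧
      ((w' : Fin d → ℤ) = ↑a + ↑w) ∧
      x = Finsupp.single w (Rgen F a) - Finsupp.single w' 1} ∪
  {x | ∃ (a : ↥(latticeK F.v)) (w : ↥(Ppts F.v χ)),
      ¬ commonCone F (intPt ↑a) (fun j => ((w : Fin d → ℤ) j : ℝ) + χ j) ∧
      x = Finsupp.single w (Rgen F a)}

/-- The `R`-module `ℂ[𝚺;χ]`, by generators and relations. -/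
abbrev Mmod (F : StackyFan d k) (χ : Fin d → ℝ) :=
  MfreeR F χ ⧸ Submodule.span (Rring F) (relM F χ)

/-- The class of the basis element `[n+χ]` in `ℂ[𝚺;χ]`. -/
noncomputable def Mgen (F : StackyFan d k) (χ : Fin d → ℝ) (w : ↥(Ppts F.v χ)) :
    Mmod F χ :=
  Submodule.Quotient.mk (Finsupp.single w 1)

/-- The shadow module `ℂ[𝚺;χ]_ξ ⊆ ℂ[𝚺;χ]` (Definition 4.1): the `R`-submodule generated
by the `[n+χ]` with `n + χ + εξ ∈ K` for all sufficiently small `ε > 0`. -/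
noncomputable def ShadowSub (F : StackyFan d k) (χ ξ : Fin d → ℝ) :
    Submodule (Rring F) (Mmod F χ) :=
  Submodule.span (Rring F)
    {x | ∃ w : ↥(Ppts F.v χ),
      ((fun j => ((w : Fin d → ℤ) j : ℝ) + χ j) ∈ ShadowPts F χ ξ) ∧ x = Mgen F χ w}

end GKZpaper

set_option synthInstance.maxHeartbeats 1000000
set_option maxHeartbeats 2000000
open scoped ENNReal
namespace GKZpaper

variable {d k : ℕ}

/-- The ideal `Z = (Z₁,…,Z_d) ⊂ R`. -/
noncomputable def Zideal (F : StackyFan d k) (g : Fin d → ((Fin d → ℤ) →ₗ[ℤ] ℤ)) :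
    Ideal (Rring F) :=
  Ideal.span {r | ∃ j, r = Zelt F (g j)}

/-- The truncated cone `conv({0} ∪ Δ) = {x ∈ K : deg x ≤ 1}`; the normalized volume of
`Δ` equals `d!` times its Lebesgue volume. -/
def degBody (S : GKZSetting d k) : Set (Fin d → ℝ) :=
  {x | x ∈ Kcone S.F.v ∧ ∑ j, x j * (S.deg (Pi.single j 1) : ℝ) ≤ 1}


end GKZpaper

namespace GKZpaper

section geometry

variable {d k : ℕ}

/-- The linear combination map `c ↦ ∑ cᵢ vᵢ`. -/
noncomputable def combL (F : StackyFan d k) : (Fin k → ℝ) →ₗ[ℝ] (Fin d → ℝ) :=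
  Fintype.linearCombination ℝ (fun i => (intPt (F.v i) : Fin d → ℝ))

lemma combL_apply (F : StackyFan d k) (c : Fin k → ℝ) (j : Fin d) :
    combL F c j = ∑ i, c i * (F.v i j : ℝ) := by
  simp [combL, Fintype.linearCombination_apply, intPt]

lemma mem_realCone (F : StackyFan d k) (I : Finset (Fin k)) (x : Fin d → ℝ) :
    x ∈ realCone F.v I ↔ ∃ c : Fin k → ℝ, (∀ i, 0 ≤ c i) ∧ (∀ i, i ∉ I → c i = 0) ∧
      x = combL F c := by
  simp only [realCone, Set.mem_ofPred_eq, funext_iff, combL_apply]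

lemma mem_Kcone (F : StackyFan d k) (x : Fin d → ℝ) :
    x ∈ Kcone F.v ↔ ∃ c : Fin k → ℝ, (∀ i, 0 ≤ c i) ∧ x = combL F c := by
  simp only [Kcone, Set.mem_ofPred_eq, funext_iff, combL_apply]

lemma comb_unique_zero (F : StackyFan d k) {I : Finset (Fin k)} (hI : I ∈ F.cones)
    {c : Fin k → ℝ} (hc : ∀ i, i ∉ I → c i = 0)
    (h : combL F c = 0) : c = 0 := by
  have h1 := F.simplicial I hI
  rw [Fintype.linearIndependent_iff] at h1
  have h2 := h1 (fun i => c i) (by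
    ext j
    have := congrFun h j
    rw [combL_apply] at this
    rw [Finset.sum_apply]
    simp only [Pi.smul_apply, smul_eq_mul]
    rw [Finset.sum_coe_sort I (fun i => c i * (F.v i j : ℝ))]
    rw [← this]
    apply Finset.sum_subset (Finset.subset_univ _)
    intro i _ hi
    simp [hc i hi])
  ext i
  by_cases hi : i ∈ I
  · exact h2 ⟨i, hi⟩
  · exact hc i hi

lemma comb_unique (F : StackyFan d k) {I : Finset (Fin k)} (hI : I ∈ F.cones)
    {c c' : Fin k → ℝ} (hc : ∀ i, i ∉ I → c i = 0) (hc' : ∀ i, i ∉ I → c' i = 0)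
    (h : combL F c = combL F c') : c = c' := by
  have := comb_unique_zero F hI (c := c - c') (by intro i hi; simp [hc i hi, hc' i hi])
    (by rw [map_sub, h, sub_self])
  exact sub_eq_zero.1 this

lemma realCone_add (F : StackyFan d k) {I : Finset (Fin k)} {x y : Fin d → ℝ}
    (hx : x ∈ realCone F.v I) (hy : y ∈ realCone F.v I) : x + y ∈ realCone F.v I := by
  rw [mem_realCone] at *
  obtain ⟨c, h1, h2, rfl⟩ := hx
  obtain ⟨c', h1', h2', rfl⟩ := hy
  exact ⟨c + c', fun i => add_nonneg (h1 i) (h1' i),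
    fun i hi => by simp [h2 i hi, h2' i hi], by rw [map_add]⟩

lemma Kcone_add (F : StackyFan d k) {x y : Fin d → ℝ}
    (hx : x ∈ Kcone F.v) (hy : y ∈ Kcone F.v) : x + y ∈ Kcone F.v := by
  rw [mem_Kcone] at *
  obtain ⟨c, h1, rfl⟩ := hx
  obtain ⟨c', h1', rfl⟩ := hy
  exact ⟨c + c', fun i => add_nonneg (h1 i) (h1' i), by rw [map_add]⟩

lemma Kcone_smul (F : StackyFan d k) {x : Fin d → ℝ} {t : ℝ} (ht : 0 ≤ t)
    (hx : x ∈ Kcone F.v) : t • x ∈ Kcone F.v := by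
  rw [mem_Kcone] at *
  obtain ⟨c, h1, rfl⟩ := hx
  exact ⟨t • c, fun i => mul_nonneg ht (h1 i), by rw [map_smul]⟩

lemma realCone_sub_Kcone (F : StackyFan d k) {I : Finset (Fin k)} {x : Fin d → ℝ}
    (hx : x ∈ realCone F.v I) : x ∈ Kcone F.v := by
  rw [mem_realCone] at hx
  rw [mem_Kcone]
  obtain ⟨c, h1, h2, rfl⟩ := hx
  exact ⟨c, h1, rfl⟩

/-- The face property. -/
lemma face_left (F : StackyFan d k) {I J : Finset (Fin k)} (hI : I ∈ F.cones) (hJ : J ∈ F.cones)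
    {x y : Fin d → ℝ} (hx : x ∈ realCone F.v J) (hy : y ∈ realCone F.v J)
    (hxy : x + y ∈ realCone F.v I) : x ∈ realCone F.v I := by
  have h3 : x + y ∈ realCone F.v (I ∩ J) := by
    rw [← F.inter I hI J hJ]; exact ⟨hxy, realCone_add F hx hy⟩
  rw [mem_realCone] at *
  obtain ⟨c, h1, h2, rfl⟩ := hx
  obtain ⟨c', h1', h2', rfl⟩ := hy
  obtain ⟨e, he1, he2, he⟩ := h3
  have : c + c' = e := by
    apply comb_unique F hJ _ _ (by rw [map_add, he])
    · intro i hi; simp [h2 i hi, h2' i hi]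
    · intro i hi; exact he2 i (by simp [hi])
  refine ⟨c, h1, fun i hi => ?_, rfl⟩
  have h4 := congrFun this i
  rw [he2 i (by simp [hi])] at h4
  have := h1 i; have := h1' i
  simp only [Pi.add_apply] at h4
  linarith

lemma face_right (F : StackyFan d k) {I J : Finset (Fin k)} (hI : I ∈ F.cones) (hJ : J ∈ F.cones)
    {x y : Fin d → ℝ} (hx : x ∈ realCone F.v J) (hy : y ∈ realCone F.v J)
    (hxy : x + y ∈ realCone F.v I) : y ∈ realCone F.v I :=
  face_left F hI hJ hy hx (by rwa [add_comm])

/-- Full-dimensional cones. -/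
def IsFull (F : StackyFan d k) (I : Finset (Fin k)) : Prop := I ∈ F.cones ∧ I.card = d

lemma card_le_of_mem (F : StackyFan d k) {I : Finset (Fin k)} (hI : I ∈ F.cones) : I.card ≤ d := by
  have := (F.simplicial I hI).fintype_card_le_finrank
  simpa using this

lemma IsFull.isMax {F : StackyFan d k} {I : Finset (Fin k)} (h : IsFull F I) : IsMaxCone F I := by
  refine ⟨h.1, fun J hJ hIJ => ?_⟩
  exact (Finset.eq_of_subset_of_card_le hIJ (by rw [h.2]; exact card_le_of_mem F hJ)).symm

lemma exists_crd (F : StackyFan d k) {I : Finset (Fin k)} (h : IsFull F I) :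
    ∃ φ : (Fin d → ℝ) →ₗ[ℝ] (Fin k → ℝ), (∀ x, combL F (φ x) = x) ∧
      ∀ x i, i ∉ I → φ x i = 0 := by
  classical
  let b := basisOfLinearIndependentOfCardEqFinrank' _ (F.simplicial I h.1)
    (by simp [h.2])
  have hb : ∀ i, b i = (fun j => (F.v i j : ℝ)) := fun i => by
    simp [b]
  let φ : (Fin d → ℝ) →ₗ[ℝ] (Fin k → ℝ) :=
    LinearMap.pi (fun i => if hi : i ∈ I then b.coord ⟨i, hi⟩ else 0)
  have hφ : ∀ x i (hi : i ∈ I), φ x i = b.repr x ⟨i, hi⟩ := by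
    intro x i hi; simp [φ, hi]
  have hφ0 : ∀ x i, i ∉ I → φ x i = 0 := by intro x i hi; simp [φ, hi]
  refine ⟨φ, fun x => ?_, hφ0⟩
  ext j
  rw [combL_apply]
  conv_rhs => rw [← b.sum_repr x]
  rw [Finset.sum_apply, ← Finset.sum_subset (Finset.subset_univ I)]
  · rw [← Finset.sum_coe_sort I]
    refine Finset.sum_congr rfl fun i _ => ?_
    rw [hφ x i i.2, hb]
    simp
  · intro i _ hi; simp [hφ0 x i hi]

open Classical in
/-- Coordinates with respect to a full-dimensional cone. -/
noncomputable def crd (F : StackyFan d k) (I : Finset (Fin k)) :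
    (Fin d → ℝ) →ₗ[ℝ] (Fin k → ℝ) :=
  if h : IsFull F I then (exists_crd F h).choose else 0

lemma comb_crd {F : StackyFan d k} {I : Finset (Fin k)} (h : IsFull F I) (x : Fin d → ℝ) :
    combL F (crd F I x) = x := by
  rw [crd, dif_pos h]; exact (exists_crd F h).choose_spec.1 x

lemma crd_off {F : StackyFan d k} {I : Finset (Fin k)} (h : IsFull F I) (x : Fin d → ℝ)
    {i : Fin k} (hi : i ∉ I) : crd F I x i = 0 := by
  rw [crd, dif_pos h]; exact (exists_crd F h).choose_spec.2 x i hi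

lemma crd_eq {F : StackyFan d k} {I : Finset (Fin k)} (h : IsFull F I) {x : Fin d → ℝ}
    {c : Fin k → ℝ} (hc : ∀ i, i ∉ I → c i = 0) (hx : x = combL F c) : crd F I x = c :=
  comb_unique F h.1 (fun _ hi => crd_off h x hi) hc (by rw [comb_crd h, hx])

lemma crd_v {F : StackyFan d k} {I : Finset (Fin k)} (h : IsFull F I) {i : Fin k} (hi : i ∈ I) :
    crd F I (intPt (F.v i)) = Pi.single i 1 := by
  apply crd_eq h
  · intro l hl
    have : l ≠ i := fun e => hl (e ▸ hi)
    simp [this]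
  · simp [combL]

lemma mem_realCone_full {F : StackyFan d k} {I : Finset (Fin k)} (h : IsFull F I) (x : Fin d → ℝ) :
    x ∈ realCone F.v I ↔ ∀ i, 0 ≤ crd F I x i := by
  rw [mem_realCone]
  constructor
  · rintro ⟨c, h1, h2, h3⟩
    rw [crd_eq h h2 h3]; exact h1
  · intro h1
    exact ⟨_, h1, fun i hi => crd_off h x hi, (comb_crd h x).symm⟩

lemma v_mem_realCone (F : StackyFan d k) {I : Finset (Fin k)} {i : Fin k} (hi : i ∈ I) :
    intPt (F.v i) ∈ realCone F.v I := by
  rw [mem_realCone]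
  refine ⟨Pi.single i 1, fun l => ?_, fun l hl => ?_, by simp [combL]⟩
  · by_cases e : l = i
    · subst e; simp
    · simp [e]
  · have : l ≠ i := fun e => hl (e ▸ hi)
    simp [this]

lemma mem_of_ray (F : StackyFan d k) {I : Finset (Fin k)} (hI : I ∈ F.cones) {i : Fin k}
    (hi : {i} ∈ F.cones) (h0 : F.v i ≠ 0) (h : intPt (F.v i) ∈ realCone F.v I) : i ∈ I := by
  have h1 : intPt (F.v i) ∈ realCone F.v ({i} ∩ I) := by
    rw [← F.inter _ hi _ hI]
    exact ⟨v_mem_realCone F (by simp), h⟩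
  by_contra hn
  rw [Finset.singleton_inter_of_notMem hn, mem_realCone] at h1
  obtain ⟨c, _, h2, h3⟩ := h1
  have : c = 0 := by ext l; exact h2 l (by simp)
  rw [this, map_zero] at h3
  apply h0
  ext j
  have := congrFun h3 j
  simpa [intPt] using this

/-- The half-open cone condition: `x + ε q` lies in the interior of the cone `I` for small
`ε > 0`. -/
def HO (F : StackyFan d k) (q : Fin d → ℝ) (I : Finset (Fin k)) (x : Fin d → ℝ) : Prop :=
  IsFull F I ∧ ∀ i ∈ I, 0 ≤ crd F I x i ∧ (crd F I x i = 0 → 0 < crd F I q i)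

lemma HO.mem {F : StackyFan d k} {q x : Fin d → ℝ} {I : Finset (Fin k)} (h : HO F q I x) :
    x ∈ realCone F.v I := by
  rw [mem_realCone_full h.1]
  intro i
  by_cases hi : i ∈ I
  · exact (h.2 i hi).1
  · rw [crd_off h.1 x hi]

lemma HO.eventually {F : StackyFan d k} {q x : Fin d → ℝ} {I : Finset (Fin k)} (h : HO F q I x) :
    ∀ᶠ ε : ℝ in nhdsWithin 0 (Set.Ioi 0), ∀ i ∈ I, 0 < crd F I (x + ε • q) i := by
  rw [Filter.eventually_all_finset]
  intro i hi
  obtain ⟨h1, h2⟩ := h.2 i hi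
  simp only [map_add, map_smul, Pi.add_apply, Pi.smul_apply, smul_eq_mul]
  rcases h1.eq_or_lt with h0 | h0
  · filter_upwards [self_mem_nhdsWithin] with ε hε
    rw [← h0, zero_add]
    exact mul_pos hε (h2 h0.symm)
  · have : Filter.Tendsto (fun ε : ℝ => crd F I x i + ε * crd F I q i) (nhds 0)
        (nhds (crd F I x i + 0 * crd F I q i)) := by
      apply Continuous.tendsto; fun_prop
    rw [zero_mul, add_zero] at this
    exact (this.eventually (lt_mem_nhds h0)).filter_mono nhdsWithin_le_nhds

/-- A point with positive coordinates in `I` which lies in the cone `J` forces `I ⊆ J`. -/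
lemma subset_of_pos {F : StackyFan d k} {x : Fin d → ℝ} {I J : Finset (Fin k)} (hI : IsFull F I)
    (hJ : J ∈ F.cones) (h : ∀ i ∈ I, 0 < crd F I x i) (hx : x ∈ realCone F.v J) : I ⊆ J := by
  have h1 : x ∈ realCone F.v (I ∩ J) := by
    rw [← F.inter _ hI.1 _ hJ]
    refine ⟨?_, hx⟩
    rw [mem_realCone_full hI]
    intro i
    by_cases hi : i ∈ I
    · exact (h i hi).le
    · rw [crd_off hI x hi]
  rw [mem_realCone] at h1
  obtain ⟨c, h2, h3, h4⟩ := h1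
  have h5 := crd_eq hI (fun i hi => h3 i (by simp [hi])) h4
  intro i hi
  by_contra hn
  have := h i hi
  rw [h5, h3 i (by simp [hn])] at this
  exact lt_irrefl _ this

lemma full_eq_of_subset {F : StackyFan d k} {I J : Finset (Fin k)} (hI : IsFull F I)
    (hJ : IsFull F J) (h : I ⊆ J) : I = J :=
  Finset.eq_of_subset_of_card_le h (by rw [hI.2, hJ.2])

lemma HO.unique {F : StackyFan d k} {q x : Fin d → ℝ} {I J : Finset (Fin k)} (hI : HO F q I x)
    (hJ : HO F q J x) : I = J := by
  obtain ⟨ε, h1, h2⟩ := (hI.eventually.and hJ.eventually).exists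
  refine full_eq_of_subset hI.1 hJ.1 (subset_of_pos hI.1 hJ.1.1 h1 ?_)
  rw [mem_realCone_full hJ.1]
  intro i
  by_cases hi : i ∈ J
  · exact (h2 i hi).le
  · rw [crd_off hJ.1 _ hi]

/-- A rank function on full cones, coming from regularity. -/
lemma exists_rank (S : GKZSetting d k) (q : Fin d → ℝ) : ∃ rk : Finset (Fin k) → ℕ,
    ∀ I J x, HO S.F q I x → IsFull S.F J → x ∈ realCone S.F.v J → J ≠ I → rk J < rk I := by
  classical
  obtain ⟨η, _, hη⟩ := S.hreg
  choose! L hL using hη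
  refine ⟨fun I => (S.F.cones.filter (fun J => L J q < L I q)).card, ?_⟩
  intro I J x hI hJ hx hne
  have key : L J q < L I q := by
    obtain ⟨ε, h1, hε⟩ := (hI.eventually.and self_mem_nhdsWithin).exists
    have hε : 0 < ε := hε
    obtain ⟨hI1, hI2⟩ := hL I hI.1.isMax
    obtain ⟨hJ1, hJ2⟩ := hL J hJ.isMax
    have hm : x + ε • q ∈ realCone S.F.v I := by
      rw [mem_realCone_full hI.1]
      intro i
      by_cases hi : i ∈ I
      · exact (h1 i hi).le
      · rw [crd_off hI.1 _ hi]
    have hn : x + ε • q ∉ realCone S.F.v J := fun h =>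
      hne (full_eq_of_subset hI.1 hJ (subset_of_pos hI.1 hJ.1 h1 h)).symm
    have e1 := hJ2 _ (realCone_sub_Kcone S.F hm) hn
    rw [hI1 _ hm] at e1
    have e2 := hJ1 _ hx
    rw [hI1 _ hI.mem] at e2
    simp only [map_add, map_smul, smul_eq_mul] at e1
    rw [e2] at e1
    have : ε * L J q < ε * L I q := by linarith
    exact lt_of_mul_lt_mul_left this hε.le
  apply Finset.card_lt_card
  rw [Finset.ssubset_iff_of_subset]
  · exact ⟨J, by simp [hJ.1, key], by simp⟩
  · intro J' h
    simp only [Finset.mem_filter] at h ⊢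
    exact ⟨h.1, h.2.trans key⟩

end geometry

end GKZpaper

namespace GKZpaper

section generic

variable {d k : ℕ}

/-- Coefficient vectors supported on `J`. -/
def suppSub (k : ℕ) (J : Finset (Fin k)) : Submodule ℝ (Fin k → ℝ) where
  carrier := {c | ∀ i, i ∉ J → c i = 0}
  add_mem' := by intro a b ha hb i hi; simp [ha i hi, hb i hi]
  zero_mem' := by intro i _; rfl
  smul_mem' := by intro t a ha i hi; simp [ha i hi]

/-- The generalized cone: combinations of `vᵢ`, `i ∈ J`, nonnegative on `T`. -/
def gcone (F : StackyFan d k) (J T : Finset (Fin k)) : Set (Fin d → ℝ) :=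
  {x | ∃ c : Fin k → ℝ, (∀ i, i ∉ J → c i = 0) ∧ (∀ i ∈ T, 0 ≤ c i) ∧ x = combL F c}

lemma gcone_univ (F : StackyFan d k) (J : Finset (Fin k)) :
    gcone F J Finset.univ = realCone F.v J := by
  ext x
  rw [mem_realCone]
  constructor
  · rintro ⟨c, h1, h2, h3⟩; exact ⟨c, fun i => h2 i (Finset.mem_univ i), h1, h3⟩
  · rintro ⟨c, h1, h2, h3⟩; exact ⟨c, h2, fun i _ => h1 i, h3⟩

lemma gcone_closed (F : StackyFan d k) {J : Finset (Fin k)} (hJ : J ∈ F.cones)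
    (T : Finset (Fin k)) : IsClosed (gcone F J T) := by
  let f : suppSub k J →ₗ[ℝ] (Fin d → ℝ) := (combL F).domRestrict (suppSub k J)
  have hf : LinearMap.ker f = ⊥ := by
    rw [LinearMap.ker_eq_bot']
    intro c hc
    have := comb_unique_zero F hJ c.2 hc
    exact Subtype.ext this
  have h1 := LinearMap.isClosedEmbedding_of_injective hf
  have h2 : gcone F J T = f '' {c | ∀ i ∈ T, 0 ≤ (c : Fin k → ℝ) i} := by
    ext x
    constructor
    · rintro ⟨c, h1, h2, h3⟩
      exact ⟨⟨c, h1⟩, h2, h3.symm⟩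
    · rintro ⟨c, h1, h2⟩
      exact ⟨c, c.2, h1, h2.symm⟩
  rw [h2]
  apply h1.isClosedMap
  have : {c : suppSub k J | ∀ i ∈ T, 0 ≤ (c : Fin k → ℝ) i} =
      ⋂ i ∈ T, {c : suppSub k J | 0 ≤ (c : Fin k → ℝ) i} := by
    ext; simp
  rw [this]
  refine isClosed_biInter fun i _ => ?_
  apply isClosed_le continuous_const
  exact (continuous_apply i).comp continuous_subtype_val

lemma tendsto_line (x y : Fin d → ℝ) :
    Filter.Tendsto (fun δ : ℝ => x + δ • y) (nhdsWithin 0 (Set.Ioi 0)) (nhds x) := by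
  have : Filter.Tendsto (fun δ : ℝ => x + δ • y) (nhds 0) (nhds (x + (0 : ℝ) • y)) := by
    apply Continuous.tendsto; fun_prop
  rw [zero_smul, add_zero] at this
  exact this.mono_left nhdsWithin_le_nhds

lemma gcone_freq (F : StackyFan d k) {J : Finset (Fin k)} (hJ : J ∈ F.cones)
    {T : Finset (Fin k)} {x y : Fin d → ℝ}
    (h : ∃ᶠ δ : ℝ in nhdsWithin 0 (Set.Ioi 0), x + δ • y ∈ gcone F J T) :
    ∃ c e : Fin k → ℝ, (∀ i, i ∉ J → c i = 0) ∧ (∀ i, i ∉ J → e i = 0) ∧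
      x = combL F c ∧ y = combL F e ∧ ∀ i ∈ T, 0 ≤ c i ∧ (c i = 0 → 0 ≤ e i) := by
  have hx : x ∈ gcone F J T := (gcone_closed F hJ T).mem_of_frequently_of_tendsto h (tendsto_line x y)
  obtain ⟨δ, h1, hδ⟩ := (h.and_eventually self_mem_nhdsWithin).exists
  have hδ : 0 < δ := hδ
  obtain ⟨c, c1, c2, c3⟩ := hx
  obtain ⟨c', c1', c2', c3'⟩ := h1
  refine ⟨c, δ⁻¹ • (c' - c), c1, ?_, c3, ?_, ?_⟩
  · intro i hi; simp [c1 i hi, c1' i hi]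
  · rw [map_smul, map_sub, ← c3, ← c3', add_sub_cancel_left, smul_smul, inv_mul_cancel₀ hδ.ne',
      one_smul]
  · intro i hi
    refine ⟨c2 i hi, fun h0 => ?_⟩
    simp only [Pi.smul_apply, Pi.sub_apply, h0, sub_zero, smul_eq_mul]
    exact mul_nonneg (inv_nonneg.2 hδ.le) (c2' i hi)

/-- `x ∈ K` and `x + εξ ∈ K` for all small `ε > 0`. -/
def tang (F : StackyFan d k) (ξ x : Fin d → ℝ) : Prop :=
  x ∈ Kcone F.v ∧ ∃ ε₀ : ℝ, 0 < ε₀ ∧ ∀ ε : ℝ, 0 < ε → ε ≤ ε₀ →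
      (fun j => x j + ε * ξ j) ∈ Kcone F.v

lemma tang_iff (S : GKZSetting d k) (ξ x : Fin d → ℝ) : tang S.F ξ x ↔
    ∃ J ∈ S.F.cones, ∃ c e : Fin k → ℝ, (∀ i, i ∉ J → c i = 0) ∧ (∀ i, i ∉ J → e i = 0) ∧
      x = combL S.F c ∧ ξ = combL S.F e ∧ ∀ i, 0 ≤ c i ∧ (c i = 0 → 0 ≤ e i) := by
  constructor
  · rintro ⟨_, ε₀, hε₀, h⟩
    have h1 : ∀ᶠ ε : ℝ in nhdsWithin 0 (Set.Ioi 0), ∃ J ∈ S.F.cones,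
        x + ε • ξ ∈ gcone S.F J Finset.univ := by
      filter_upwards [Ioc_mem_nhdsGT hε₀] with ε hε
      have h2 : x + ε • ξ ∈ Kcone S.F.v := h ε hε.1 hε.2
      rw [← S.hsupp, support] at h2
      simp only [Set.mem_iUnion] at h2
      obtain ⟨J, hJ, h2⟩ := h2
      exact ⟨J, hJ, by rwa [gcone_univ]⟩
    have h2 : ∃ J ∈ S.F.cones, ∃ᶠ ε : ℝ in nhdsWithin 0 (Set.Ioi 0),
        x + ε • ξ ∈ gcone S.F J Finset.univ := by
      by_contra hn
      push Not at hn
      rw [← Filter.eventually_all_finset] at hn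
      obtain ⟨ε, ⟨J, hJ, h3⟩, h4⟩ := (h1.and hn).exists
      exact h4 J hJ h3
    obtain ⟨J, hJ, h3⟩ := h2
    obtain ⟨c, e, h4, h5, h6, h7, h8⟩ := gcone_freq S.F hJ h3
    exact ⟨J, hJ, c, e, h4, h5, h6, h7, fun i => h8 i (Finset.mem_univ i)⟩
  · rintro ⟨J, hJ, c, e, h4, h5, rfl, rfl, h8⟩
    refine ⟨(mem_Kcone _ _).2 ⟨c, fun i => (h8 i).1, rfl⟩, ?_⟩
    have h1 : ∀ᶠ ε : ℝ in nhdsWithin 0 (Set.Ioi 0), ∀ i, 0 ≤ c i + ε * e i := by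
      rw [Filter.eventually_all]
      intro i
      rcases (h8 i).1.eq_or_lt with h0 | h0
      · filter_upwards [self_mem_nhdsWithin] with ε hε
        rw [← h0, zero_add]
        exact mul_nonneg (le_of_lt hε) ((h8 i).2 h0.symm)
      · have : Filter.Tendsto (fun ε : ℝ => c i + ε * e i) (nhds 0) (nhds (c i + 0 * e i)) := by
          apply Continuous.tendsto; fun_prop
        rw [zero_mul, add_zero] at this
        exact ((this.eventually (lt_mem_nhds h0)).filter_mono nhdsWithin_le_nhds).mono
          fun _ h => le_of_lt h
    obtain ⟨ε₀, hε₀, h2⟩ := mem_nhdsGT_iff_exists_Ioc_subset.1 h1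
    refine ⟨ε₀, hε₀, fun ε h3 h4 => ?_⟩
    rw [mem_Kcone]
    refine ⟨c + ε • e, h2 ⟨h3, h4⟩, ?_⟩
    rw [map_add, map_smul]; rfl

/-- `intPt` as a linear map. -/
def intPtL (d : ℕ) : (Fin d → ℤ) →ₗ[ℤ] (Fin d → ℝ) where
  toFun := intPt
  map_add' := by intro a b; ext j; simp [intPt]
  map_smul' := by intro a b; ext j; simp [intPt]

lemma combL_surj (S : GKZSetting d k) : LinearMap.range (combL S.F) = ⊤ := by
  have h1 : Submodule.span ℤ (Set.range S.F.v) ≤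
      ((LinearMap.range (combL S.F)).restrictScalars ℤ).comap (intPtL d) := by
    rw [Submodule.span_le]
    rintro _ ⟨i, rfl⟩
    refine ⟨Pi.single i 1, ?_⟩
    simp [combL, intPtL]
  rw [S.hgen] at h1
  rw [eq_top_iff]
  intro x _
  have h2 : x = ∑ j, x j • intPt (Pi.single j 1 : Fin d → ℤ) := by
    ext j
    rw [Finset.sum_apply]
    simp [intPt, Pi.single_apply]
  rw [h2]
  refine Submodule.sum_mem _ fun j _ => Submodule.smul_mem _ _ ?_
  exact h1 (Submodule.mem_top (x := (Pi.single j 1 : Fin d → ℤ)))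

lemma exists_p (S : GKZSetting d k) : ∃ p ∈ Kcone S.F.v, ∀ J ∈ S.F.cones, J.card < d →
    p ∉ gcone S.F J ∅ := by
  classical
  have hx : ∃ x : Fin d → ℝ, ∀ J ∈ S.F.cones, J.card < d → x ∉ gcone S.F J ∅ := by
    let s := (S.F.cones.filter (fun J => J.card < d)).image
      (fun J : Finset (Fin k) => Submodule.span ℝ ((fun i => intPt (S.F.v i)) '' (J : Set (Fin k))))
    have := Subspace.biUnion_ne_univ_of_top_notMem (s := s) (by
      intro h
      simp only [s, Finset.mem_image, Finset.mem_filter] at h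
      obtain ⟨J, ⟨_, h2⟩, h3⟩ := h
      have h4 := finrank_span_finset_le_card (R := ℝ) (J.image (fun i => intPt (S.F.v i)))
      rw [Set.finrank, Finset.coe_image, h3] at h4
      have h5 := h4.trans Finset.card_image_le
      simp at h5
      omega)
    rw [Set.ne_univ_iff_exists_notMem] at this
    obtain ⟨x, hx⟩ := this
    refine ⟨x, fun J hJ hc hm => hx ?_⟩
    simp only [Set.mem_iUnion]
    refine ⟨_, Finset.mem_image_of_mem _ (Finset.mem_filter.2 ⟨hJ, hc⟩), ?_⟩
    obtain ⟨c, c1, _, rfl⟩ := hm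
    simp only [combL, Fintype.linearCombination_apply]
    refine Submodule.sum_mem _ fun i _ => ?_
    by_cases hi : i ∈ J
    · exact Submodule.smul_mem _ _ (Submodule.subset_span ⟨i, hi, rfl⟩)
    · rw [c1 i hi, zero_smul]; exact Submodule.zero_mem _
  obtain ⟨x, hx⟩ := hx
  obtain ⟨c, rfl⟩ : x ∈ LinearMap.range (combL S.F) := by rw [combL_surj]; trivial
  have h1 : ∀ᶠ δ : ℝ in nhdsWithin 0 (Set.Ioi 0), ∀ i, 0 ≤ 1 + δ * c i := by
    rw [Filter.eventually_all]
    intro i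
    have : Filter.Tendsto (fun ε : ℝ => 1 + ε * c i) (nhds 0) (nhds (1 + 0 * c i)) := by
      apply Continuous.tendsto; fun_prop
    rw [zero_mul, add_zero] at this
    exact ((this.eventually (lt_mem_nhds one_pos)).filter_mono nhdsWithin_le_nhds).mono
          fun _ h => le_of_lt h
  have h2 : ∀ᶠ δ : ℝ in nhdsWithin 0 (Set.Ioi 0), ∀ J ∈ S.F.cones, J.card < d →
      combL S.F (fun _ => 1) + δ • combL S.F c ∉ gcone S.F J ∅ := by
    rw [Filter.eventually_all_finset]
    intro J hJ
    by_contra hn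
    have h3 : ∃ᶠ δ : ℝ in nhdsWithin 0 (Set.Ioi 0),
      J.card < d ∧ combL S.F (fun _ => 1) + δ • combL S.F c ∈ gcone S.F J ∅ := by
      rw [Filter.not_eventually] at hn
      refine hn.mono fun δ h => ?_
      push Not at h; exact h
    obtain ⟨_, hc, _⟩ := h3.exists
    obtain ⟨a, e, h4, h5, h6, h7, h8⟩ := gcone_freq S.F hJ (h3.mono fun _ h => h.2)
    exact hx J hJ hc ⟨e, h5, by simp, h7⟩
  obtain ⟨δ, h3, h4⟩ := (h1.and h2).exists
  refine ⟨_, ?_, h4⟩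
  rw [mem_Kcone]
  refine ⟨(fun _ => 1) + δ • c, h3, by rw [map_add, map_smul]⟩

/-- The generic perturbation of `ξ`. -/
lemma exists_q (S : GKZSetting d k) (ξ : Fin d → ℝ) : ∃ q : Fin d → ℝ,
    (∀ I, IsFull S.F I → ∀ i ∈ I, crd S.F I q i ≠ 0) ∧
    ∀ x, tang S.F ξ x ↔ ∃ I, HO S.F q I x := by
  classical
  obtain ⟨p, hpK, hp⟩ := exists_p S
  have h2 : ∀ᶠ δ : ℝ in nhdsWithin 0 (Set.Ioi 0), ∀ J ∈ S.F.cones, J.card < d →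
      ξ + δ • p ∉ gcone S.F J ∅ := by
    rw [Filter.eventually_all_finset]
    intro J hJ
    by_contra hn
    have h3 : ∃ᶠ δ : ℝ in nhdsWithin 0 (Set.Ioi 0),
      J.card < d ∧ ξ + δ • p ∈ gcone S.F J ∅ := by
      rw [Filter.not_eventually] at hn
      refine hn.mono fun δ h => ?_
      push Not at h; exact h
    obtain ⟨_, hc, _⟩ := h3.exists
    obtain ⟨a, e, h4, h5, h6, h7, h8⟩ := gcone_freq S.F hJ (h3.mono fun _ h => h.2)
    exact hp J hJ hc ⟨e, h5, by simp, h7⟩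
  have h3 : ∀ᶠ δ : ℝ in nhdsWithin 0 (Set.Ioi 0), ∀ J ∈ S.F.cones, ∀ T : Finset (Fin k),
      ξ + δ • p ∈ gcone S.F J T → ξ ∈ gcone S.F J T := by
    rw [Filter.eventually_all_finset]
    intro J hJ
    rw [Filter.eventually_all]
    intro T
    by_cases hT : ξ ∈ gcone S.F J T
    · exact Filter.Eventually.of_forall fun _ _ => hT
    · have := (gcone_closed S.F hJ T).isOpen_compl.mem_nhds hT
      filter_upwards [(tendsto_line ξ p).eventually this] with δ h1 h2
      exact absurd h2 h1
  obtain ⟨δ, ⟨h4, h5⟩, hδ⟩ := ((h2.and h3).and self_mem_nhdsWithin).exists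
  have hδ : 0 < δ := hδ
  set q := ξ + δ • p with hq
  have hgen : ∀ I, IsFull S.F I → ∀ i ∈ I, crd S.F I q i ≠ 0 := by
    intro I hI i hi h0
    refine h4 (I.erase i) (S.F.downClosed I hI.1 _ (Finset.erase_subset _ _)) ?_ ?_
    · rw [← hI.2]; exact Finset.card_erase_lt_of_mem hi
    · refine ⟨crd S.F I q, fun l hl => ?_, by simp, (comb_crd hI q).symm⟩
      by_cases e : l = i
      · rw [e, h0]
      · exact crd_off hI q (fun h => hl (Finset.mem_erase.2 ⟨e, h⟩))
  refine ⟨q, hgen, fun x => ?_⟩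
  have hiff : tang S.F ξ x ↔ tang S.F q x := by
    constructor
    · rintro ⟨hx, ε₀, hε₀, h⟩
      refine ⟨hx, ε₀, hε₀, fun ε h6 h7 => ?_⟩
      have := Kcone_add S.F (h ε h6 h7) (Kcone_smul S.F (mul_nonneg h6.le hδ.le) hpK)
      convert this using 1
      ext j
      simp [hq]; ring
    · intro h
      obtain ⟨J, hJ, c, e, c1, c2, c3, c4, c5⟩ := (tang_iff S q x).1 h
      obtain ⟨e', e1, e2, e3⟩ := h5 J hJ (Finset.univ.filter (fun i => c i = 0))
        ⟨e, c2, fun i hi => (c5 i).2 (by simpa using hi), c4⟩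
      exact (tang_iff S ξ x).2 ⟨J, hJ, c, e', c1, e1, c3, e3,
        fun i => ⟨(c5 i).1, fun h => e2 i (by simpa using h)⟩⟩
  rw [hiff, tang_iff]
  constructor
  · rintro ⟨J, hJ, c, e, c1, c2, c3, c4, c5⟩
    have hJf : IsFull S.F J := by
      refine ⟨hJ, ?_⟩
      by_contra hne
      exact h4 J hJ (lt_of_le_of_ne (card_le_of_mem S.F hJ) hne) ⟨e, c2, by simp, c4⟩
    refine ⟨J, hJf, fun i hi => ?_⟩
    rw [crd_eq hJf c1 c3, crd_eq hJf c2 c4]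
    refine ⟨(c5 i).1, fun h => lt_of_le_of_ne ((c5 i).2 h) (Ne.symm ?_)⟩
    have := hgen J hJf i hi
    rwa [crd_eq hJf c2 c4] at this
  · rintro ⟨I, hI⟩
    refine ⟨I, hI.1.1, crd S.F I x, crd S.F I q, fun i hi => crd_off hI.1 _ hi,
      fun i hi => crd_off hI.1 _ hi, (comb_crd hI.1 x).symm, (comb_crd hI.1 q).symm, fun i => ?_⟩
    by_cases hi : i ∈ I
    · exact ⟨(hI.2 i hi).1, fun h => ((hI.2 i hi).2 h).le⟩
    · rw [crd_off hI.1 _ hi, crd_off hI.1 _ hi]; simp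

end generic

end GKZpaper

namespace GKZpaper

section algebraBasis

variable {d k : ℕ}

/-- Three points lie in a common cone. -/
def triple (F : StackyFan d k) (a b w : Fin d → ℝ) : Prop :=
  ∃ J ∈ F.cones, a ∈ realCone F.v J ∧ b ∈ realCone F.v J ∧ w ∈ realCone F.v J

lemma common3_left (F : StackyFan d k) (a b w : Fin d → ℝ) :
    (commonCone F b w ∧ commonCone F a (b + w)) ↔
      triple F a b w := by
  constructor
  · rintro ⟨⟨J', hJ', h1, h2⟩, ⟨J, hJ, h3, h4⟩⟩
    exact ⟨J, hJ, h3, face_left F hJ hJ' h1 h2 h4, face_right F hJ hJ' h1 h2 h4⟩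
  · rintro ⟨J, hJ, h1, h2, h3⟩
    exact ⟨⟨J, hJ, h2, h3⟩, ⟨J, hJ, h1, realCone_add F h2 h3⟩⟩

lemma common3_right (F : StackyFan d k) (a b w : Fin d → ℝ) :
    (commonCone F a b ∧ commonCone F (a + b) w) ↔
      triple F a b w := by
  constructor
  · rintro ⟨⟨J', hJ', h1, h2⟩, ⟨J, hJ, h3, h4⟩⟩
    exact ⟨J, hJ, face_left F hJ hJ' h1 h2 h3, face_right F hJ hJ' h1 h2 h3, h4⟩
  · rintro ⟨J, hJ, h1, h2, h3⟩
    exact ⟨⟨J, hJ, h1, h2⟩, ⟨J, hJ, realCone_add F h1 h2, h3⟩⟩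

/-- The point `n + χ`. -/
def pt (χ : Fin d → ℝ) (n : Fin d → ℤ) : Fin d → ℝ := fun j => (n j : ℝ) + χ j

lemma pt_add (χ : Fin d → ℝ) (a n : Fin d → ℤ) : pt χ (a + n) = intPt a + pt χ n := by
  ext j; simp [pt, intPt]; ring

lemma intPt_add (a b : Fin d → ℤ) : intPt (a + b) = intPt a + intPt b := by
  ext j; simp [intPt]

lemma pt_zero (n : Fin d → ℤ) : pt 0 n = intPt n := by
  ext j; simp [pt, intPt]

/-- Translation of a module basis point by a lattice point. -/
def addP (F : StackyFan d k) (χ : Fin d → ℝ) (a : ↥(latticeK F.v)) (w : ↥(Ppts F.v χ)) :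
    ↥(Ppts F.v χ) :=
  ⟨(a : Fin d → ℤ) + w, by
    have := Kcone_add F a.2 w.2
    change pt χ _ ∈ Kcone F.v
    rw [pt_add]; exact this⟩

/-- Sum of two lattice points. -/
def addL (F : StackyFan d k) (a b : ↥(latticeK F.v)) : ↥(latticeK F.v) :=
  ⟨(a : Fin d → ℤ) + b, by
    have := Kcone_add F a.2 b.2
    change intPt _ ∈ Kcone F.v
    rw [intPt_add]; exact this⟩

open Classical in
/-- The operator `[a]` on the span of the symbols `[w]`. -/
noncomputable def op (F : StackyFan d k) (χ : Fin d → ℝ) (a : ↥(latticeK F.v)) :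
    Module.End ℂ (↥(Ppts F.v χ) →₀ ℂ) :=
  Finsupp.linearCombination ℂ (fun w => if commonCone F (intPt a) (pt χ w) then
    Finsupp.single (addP F χ a w) (1 : ℂ) else 0)

open Classical in
lemma op_single (F : StackyFan d k) (χ : Fin d → ℝ) (a : ↥(latticeK F.v)) (w : ↥(Ppts F.v χ)) :
    op F χ a (Finsupp.single w 1) = if commonCone F (intPt a) (pt χ w) then
    Finsupp.single (addP F χ a w) (1 : ℂ) else 0 := by
  rw [op, Finsupp.linearCombination_single, one_smul]

open Classical in
lemma op_op (F : StackyFan d k) (χ : Fin d → ℝ) (a b : ↥(latticeK F.v)) (w : ↥(Ppts F.v χ)) :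
    op F χ a (op F χ b (Finsupp.single w 1)) =
      if triple F (intPt a) (intPt b) (pt χ w)
      then Finsupp.single (addP F χ (addL F a b) w) (1 : ℂ) else 0 := by
  have e : addP F χ a (addP F χ b w) = addP F χ (addL F a b) w :=
    Subtype.ext (add_assoc _ _ _).symm
  have e2 : pt χ (addP F χ b w) = intPt (b : Fin d → ℤ) + pt χ w := pt_add _ _ _
  rw [← common3_left, op_single]
  by_cases h1 : commonCone F (intPt (b : Fin d → ℤ)) (pt χ w)
  · rw [if_pos h1, op_single, e, e2]
    simp [h1]
  · simp [h1]

lemma end_ext {P : Type*} {f g : Module.End ℂ (P →₀ ℂ)}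
    (h : ∀ w, f (Finsupp.single w 1) = g (Finsupp.single w 1)) : f = g := by
  apply Finsupp.lhom_ext'
  intro w
  ext
  simpa using DFunLike.congr_fun (h w) _

lemma op_comm (F : StackyFan d k) (χ : Fin d → ℝ) (a b : ↥(latticeK F.v)) :
    op F χ a * op F χ b = op F χ b * op F χ a := by
  apply end_ext
  intro w
  simp only [Module.End.mul_apply]
  rw [op_op, op_op]
  have e : addL F a b = addL F b a := Subtype.ext (add_comm _ _)
  have e2 : triple F (intPt a) (intPt b) (pt χ w) ↔ triple F (intPt b) (intPt a) (pt χ w) := by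
    constructor
    · rintro ⟨J, h0, h1, h2, h3⟩; exact ⟨J, h0, h2, h1, h3⟩
    · rintro ⟨J, h0, h1, h2, h3⟩; exact ⟨J, h0, h2, h1, h3⟩
  rw [e]
  by_cases h : triple F (intPt a) (intPt b) (pt χ w)
  · rw [if_pos h, if_pos (e2.1 h)]
  · rw [if_neg h, if_neg (fun h' => h (e2.2 h'))]

lemma op_mul_common (F : StackyFan d k) (χ : Fin d → ℝ) (a b : ↥(latticeK F.v))
    (h : commonCone F (intPt a) (intPt b)) :
    op F χ a * op F χ b = op F χ (addL F a b) := by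
  apply end_ext
  intro w
  simp only [Module.End.mul_apply]
  rw [op_op, op_single]
  have : intPt (addL F a b : Fin d → ℤ) = intPt (a : Fin d → ℤ) + intPt (b : Fin d → ℤ) :=
    intPt_add _ _
  rw [this]
  have e2 := common3_right F (intPt a) (intPt b) (pt χ w)
  by_cases h' : triple F (intPt a) (intPt b) (pt χ w)
  · rw [if_pos h', if_pos (e2.2 h').2]
  · rw [if_neg h', if_neg (fun h'' => h' (e2.1 ⟨h, h''⟩))]

lemma op_mul_not (F : StackyFan d k) (χ : Fin d → ℝ) (a b : ↥(latticeK F.v))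
    (h : ¬ commonCone F (intPt a) (intPt b)) :
    op F χ a * op F χ b = 0 := by
  apply end_ext
  intro w
  simp only [Module.End.mul_apply]
  rw [op_op, ← common3_right]
  simp [h]

lemma commonCone_zero (S : GKZSetting d k) {x : Fin d → ℝ} (hx : x ∈ Kcone S.F.v) :
    commonCone S.F (intPt 0) x := by
  rw [← S.hsupp, support] at hx
  simp only [Set.mem_iUnion] at hx
  obtain ⟨J, hJ, h2⟩ := hx
  refine ⟨J, hJ, ?_, h2⟩
  rw [mem_realCone]
  refine ⟨0, by simp, by simp, ?_⟩
  rw [map_zero]; ext j; simp [intPt]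

lemma op_zero (S : GKZSetting d k) (χ : Fin d → ℝ) (z : ↥(latticeK S.F.v))
    (hz : (z : Fin d → ℤ) = 0) : op S.F χ z = 1 := by
  apply end_ext
  intro w
  rw [op_single, if_pos]
  · have : addP S.F χ z w = w := Subtype.ext (by simp [addP, hz])
    rw [this]; rfl
  · rw [hz]; exact commonCone_zero S w.2

open scoped IsMulCommutative in
lemma exists_aeval_comm {σ B : Type*} [Ring B] [Algebra ℂ B] (x : σ → B)
    (hx : ∀ a b, x a * x b = x b * x a) :
    ∃ f : MvPolynomial σ ℂ →ₐ[ℂ] B, ∀ a, f (MvPolynomial.X a) = x a := by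
  have : IsMulCommutative (Algebra.adjoin ℂ (Set.range x)) :=
    Algebra.isMulCommutative_adjoin ℂ (by
      rintro _ ⟨a, rfl⟩ _ ⟨b, rfl⟩; exact hx a b)
  let y : σ → Algebra.adjoin ℂ (Set.range x) := fun a => ⟨x a, Algebra.subset_adjoin ⟨a, rfl⟩⟩
  refine ⟨(Algebra.adjoin ℂ (Set.range x)).val.comp (MvPolynomial.aeval y), fun a => ?_⟩
  rw [AlgHom.comp_apply, MvPolynomial.aeval_X]; rfl

lemma exists_rho (S : GKZSetting d k) (χ : Fin d → ℝ) :
    ∃ ρ : Rring S.F →ₐ[ℂ] Module.End ℂ (↥(Ppts S.F.v χ) →₀ ℂ),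
      ∀ a, ρ (Rgen S.F a) = op S.F χ a := by
  obtain ⟨f, hf⟩ := exists_aeval_comm (op S.F χ) (op_comm S.F χ)
  have hk : ∀ r ∈ Ideal.span (relR S.F), f r = 0 := by
    intro r hr
    have : Ideal.span (relR S.F) ≤ RingHom.ker f := by
      rw [Ideal.span_le]
      rintro p ((⟨a, b, c, h1, h2, rfl⟩ | ⟨a, b, h1, rfl⟩) | ⟨z, h1, rfl⟩)
      · rw [SetLike.mem_coe, RingHom.mem_ker, map_sub, map_mul, hf, hf, hf, sub_eq_zero]
        have : c = addL S.F a b := Subtype.ext h2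
        rw [this]
        exact op_mul_common S.F χ a b h1
      · rw [SetLike.mem_coe, RingHom.mem_ker, map_mul, hf, hf]
        exact op_mul_not S.F χ a b h1
      · rw [SetLike.mem_coe, RingHom.mem_ker, map_sub, hf, map_one, sub_eq_zero]
        exact op_zero S χ z h1
    exact this hr
  refine ⟨Ideal.Quotient.liftₐ _ f hk, fun a => ?_⟩
  rw [← hf]; rfl

lemma Rgen_mul_common (F : StackyFan d k) (a b : ↥(latticeK F.v))
    (h : commonCone F (intPt a) (intPt b)) : Rgen F a * Rgen F b = Rgen F (addL F a b) := by
  rw [Rgen, Rgen, Rgen, ← map_mul, Ideal.Quotient.eq]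
  exact Ideal.subset_span (Or.inl (Or.inl ⟨a, b, _, h, rfl, rfl⟩))

lemma Rgen_mul_not (F : StackyFan d k) (a b : ↥(latticeK F.v))
    (h : ¬ commonCone F (intPt a) (intPt b)) : Rgen F a * Rgen F b = 0 := by
  rw [Rgen, Rgen, ← map_mul, Ideal.Quotient.eq_zero_iff_mem]
  exact Ideal.subset_span (Or.inl (Or.inr ⟨a, b, h, rfl⟩))

lemma zero_mem_latticeK (F : StackyFan d k) : (0 : Fin d → ℤ) ∈ latticeK F.v := by
  refine ⟨0, by simp, fun j => by simp [intPt]⟩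

lemma Rgen_zero (F : StackyFan d k) : Rgen F ⟨0, zero_mem_latticeK F⟩ = 1 := by
  rw [Rgen, ← map_one (Ideal.Quotient.mk (Ideal.span (relR F))), Ideal.Quotient.eq]
  exact Ideal.subset_span (Or.inr ⟨_, rfl, rfl⟩)

/-- `R` is spanned over `ℂ` by the `[n]`. -/
lemma R_span (F : StackyFan d k) : Submodule.span ℂ (Set.range (Rgen F)) = ⊤ := by
  rw [eq_top_iff]
  intro r _
  obtain ⟨p, rfl⟩ := Ideal.Quotient.mk_surjective r
  induction p using MvPolynomial.induction_on with
  | C c =>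
    have : (Ideal.Quotient.mk (Ideal.span (relR F))) (MvPolynomial.C c) =
        c • Rgen F ⟨0, zero_mem_latticeK F⟩ := by
      rw [Rgen_zero, ← Algebra.algebraMap_eq_smul_one]; rfl
    rw [this]
    exact Submodule.smul_mem _ _ (Submodule.subset_span ⟨_, rfl⟩)
  | add p q hp hq => rw [map_add]; exact Submodule.add_mem _ (hp trivial) (hq trivial)
  | mul_X p n hp =>
    rw [map_mul]
    change _ * Rgen F n ∈ _
    refine Submodule.span_induction (p := fun x _ => x * Rgen F n ∈ Submodule.span ℂ _)
      ?_ ?_ ?_ ?_ (hp trivial)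
    · rintro _ ⟨a, rfl⟩
      by_cases h : commonCone F (intPt a) (intPt n)
      · rw [Rgen_mul_common F a n h]; exact Submodule.subset_span ⟨_, rfl⟩
      · rw [Rgen_mul_not F a n h]; exact Submodule.zero_mem _
    · rw [zero_mul]; exact Submodule.zero_mem _
    · intro x y _ _ hx hy; rw [add_mul]; exact Submodule.add_mem _ hx hy
    · intro c x _ hx; rw [smul_mul_assoc]; exact Submodule.smul_mem _ _ hx

lemma Rgen_smul_common (F : StackyFan d k) (χ : Fin d → ℝ) (a : ↥(latticeK F.v))
    (w : ↥(Ppts F.v χ)) (h : commonCone F (intPt a) (pt χ w)) :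
    Rgen F a • Mgen F χ w = Mgen F χ (addP F χ a w) := by
  rw [Mgen, Mgen, ← Submodule.Quotient.mk_smul, Finsupp.smul_single, smul_eq_mul, mul_one,
    Submodule.Quotient.eq]
  exact Submodule.subset_span (Or.inl ⟨a, w, _, h, rfl, rfl⟩)

lemma Rgen_smul_not (F : StackyFan d k) (χ : Fin d → ℝ) (a : ↥(latticeK F.v))
    (w : ↥(Ppts F.v χ)) (h : ¬ commonCone F (intPt a) (pt χ w)) :
    Rgen F a • Mgen F χ w = 0 := by
  rw [Mgen, ← Submodule.Quotient.mk_smul, Finsupp.smul_single, smul_eq_mul, mul_one,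
    Submodule.Quotient.mk_eq_zero]
  exact Submodule.subset_span (Or.inr ⟨a, w, h, rfl⟩)

/-- The `[n+χ]` are linearly independent over `ℂ`. -/
lemma M_indep (S : GKZSetting d k) (χ : Fin d → ℝ) : LinearIndependent ℂ (Mgen S.F χ) := by
  obtain ⟨ρ, hρ⟩ := exists_rho S χ
  let _ : Module (Rring S.F) (↥(Ppts S.F.v χ) →₀ ℂ) := Module.compHom _ ρ.toRingHom
  have hsm : ∀ (r : Rring S.F) (x : ↥(Ppts S.F.v χ) →₀ ℂ), r • x = ρ r x := fun _ _ => rfl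
  let f : MfreeR S.F χ →ₗ[Rring S.F] (↥(Ppts S.F.v χ) →₀ ℂ) :=
    Finsupp.linearCombination (Rring S.F) (fun w => Finsupp.single w (1 : ℂ))
  have hf : ∀ w r, f (Finsupp.single w r) = ρ r (Finsupp.single w 1) := by
    intro w r
    simp only [f]
    rw [Finsupp.linearCombination_single, hsm]
  have hk : Submodule.span (Rring S.F) (relM S.F χ) ≤ LinearMap.ker f := by
    rw [Submodule.span_le]
    rintro x (⟨a, w, w', h1, h2, rfl⟩ | ⟨a, w, h1, rfl⟩)
    · rw [SetLike.mem_coe, LinearMap.mem_ker, map_sub, hf, hf, hρ, map_one, op_single]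
      have : w' = addP S.F χ a w := Subtype.ext h2
      have h1' : commonCone S.F (intPt a) (pt χ w) := h1
      rw [if_pos h1', this, Module.End.one_apply, sub_self]
    · rw [SetLike.mem_coe, LinearMap.mem_ker, hf, hρ, op_single]
      exact if_neg h1
  let fq := Submodule.liftQ _ f hk
  have hfq : ∀ w, fq (Mgen S.F χ w) = Finsupp.single w 1 := by
    intro w
    change f (Finsupp.single w 1) = _
    rw [hf, map_one]; rfl
  have hc : ∀ (c : ℂ) (x : Mmod S.F χ), fq (c • x) = c • fq x := by
    intro c x
    rw [algebra_compatible_smul (Rring S.F) c x, map_smul, hsm, AlgHom.commutes]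
    rfl
  let fc : Mmod S.F χ →ₗ[ℂ] (↥(Ppts S.F.v χ) →₀ ℂ) :=
    { toFun := fq, map_add' := fq.map_add, map_smul' := hc }
  apply LinearIndependent.of_comp fc
  have : (fc ∘ Mgen S.F χ) = fun w => Finsupp.single w (1 : ℂ) := funext hfq
  rw [this]
  have := (Finsupp.basisSingleOne (R := ℂ) (ι := ↥(Ppts S.F.v χ))).linearIndependent
  simpa using this

lemma shadow_iff (S : GKZSetting d k) (χ ξ : Fin d → ℝ) (w : ↥(Ppts S.F.v χ)) :
    ((fun j => ((w : Fin d → ℤ) j : ℝ) + χ j) ∈ ShadowPts S.F χ ξ) ↔ tang S.F ξ (pt χ w) := by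
  constructor
  · rintro ⟨_, h⟩; exact h
  · intro h; exact ⟨⟨w, fun j => rfl⟩, h⟩

lemma tang_add (F : StackyFan d k) {ξ x a : Fin d → ℝ} (h : tang F ξ x) (ha : a ∈ Kcone F.v) :
    tang F ξ (a + x) := by
  obtain ⟨h1, ε₀, h2, h3⟩ := h
  refine ⟨Kcone_add F ha h1, ε₀, h2, fun ε h4 h5 => ?_⟩
  have := Kcone_add F ha (h3 ε h4 h5)
  convert this using 1
  ext j; simp; ring

/-- The shadow module is spanned over `ℂ` by the shadow points. -/
lemma shadow_span (S : GKZSetting d k) (χ ξ : Fin d → ℝ) :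
    ((ShadowSub S.F χ ξ).restrictScalars ℂ : Submodule ℂ (Mmod S.F χ)) =
      Submodule.span ℂ {x | ∃ w : ↥(Ppts S.F.v χ), tang S.F ξ (pt χ w) ∧ x = Mgen S.F χ w} := by
  apply le_antisymm
  · intro x hx
    rw [Submodule.restrictScalars_mem, ShadowSub] at hx
    refine Submodule.span_induction (p := fun x _ => x ∈ Submodule.span ℂ _) ?_ ?_ ?_ ?_ hx
    · rintro _ ⟨w, h, rfl⟩
      exact Submodule.subset_span ⟨w, (shadow_iff S χ ξ w).1 h, rfl⟩
    · exact Submodule.zero_mem _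
    · intro x y _ _ hx hy; exact Submodule.add_mem _ hx hy
    · intro r x _ hx
      have hr : r ∈ Submodule.span ℂ (Set.range (Rgen S.F)) := by rw [R_span]; trivial
      refine Submodule.span_induction (p := fun r _ => r • x ∈ Submodule.span ℂ _)
        ?_ ?_ ?_ ?_ hr
      · rintro _ ⟨a, rfl⟩
        refine Submodule.span_induction (p := fun x _ => Rgen S.F a • x ∈ Submodule.span ℂ _)
          ?_ ?_ ?_ ?_ hx
        · rintro _ ⟨w, h, rfl⟩
          by_cases hc : commonCone S.F (intPt a) (pt χ w)
          · rw [Rgen_smul_common _ _ _ _ hc]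
            refine Submodule.subset_span ⟨_, ?_, rfl⟩
            change tang _ _ (pt χ ((a : Fin d → ℤ) + w))
            rw [pt_add]
            exact tang_add S.F h a.2
          · rw [Rgen_smul_not _ _ _ _ hc]; exact Submodule.zero_mem _
        · rw [smul_zero]; exact Submodule.zero_mem _
        · intro x y _ _ hx hy; rw [smul_add]; exact Submodule.add_mem _ hx hy
        · intro c x _ hx; rw [smul_comm]; exact Submodule.smul_mem _ _ hx
      · have h0 : (0 : Rring S.F) • x = 0 := zero_smul (Rring S.F) x
        rw [h0]; exact Submodule.zero_mem _
      · intro x y _ _ hx hy; rw [add_smul]; exact Submodule.add_mem _ hx hy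
      · intro c x _ hx; rw [smul_assoc]; exact Submodule.smul_mem _ _ hx
  · rw [Submodule.span_le]
    rintro _ ⟨w, h, rfl⟩
    exact Submodule.subset_span ⟨w, (shadow_iff S χ ξ w).2 h, rfl⟩

end algebraBasis

end GKZpaper

namespace GKZpaper

section abstractAlgebra

open MvPolynomial

variable {d k : ℕ} {R N : Type*} [CommRing R] [Algebra ℂ R] [AddCommGroup N] [Module R N]
  [Module ℂ N] [IsScalarTower ℂ R N]

/-- The map `p ↦ ∑ p_γ(z) b_γ`. -/
noncomputable def PhiMap {G : Type*} [Fintype G] (z : Fin d → R) (b : G → N) :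
    (G → MvPolynomial (Fin d) ℂ) →ₗ[ℂ] N where
  toFun p := ∑ γ, aeval z (p γ) • b γ
  map_add' p q := by simp [add_smul, Finset.sum_add_distrib]
  map_smul' c p := by simp [Finset.smul_sum, smul_assoc]

lemma PhiMap_apply {G : Type*} [Fintype G] (z : Fin d → R) (b : G → N)
    (p : G → MvPolynomial (Fin d) ℂ) : PhiMap z b p = ∑ γ, aeval z (p γ) • b γ := rfl

lemma PhiMap_X {G : Type*} [Fintype G] (z : Fin d → R) (b : G → N)
    (p : G → MvPolynomial (Fin d) ℂ) (j : Fin d) :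
    z j • PhiMap z b p = PhiMap z b (fun γ => X j * p γ) := by
  simp only [PhiMap_apply, Finset.smul_sum, map_mul, aeval_X, mul_smul]

lemma aeval_sub_const_mem (z : Fin d → R) (p : MvPolynomial (Fin d) ℂ) :
    aeval z p - algebraMap ℂ R (constantCoeff p) ∈ Ideal.span {r | ∃ j, r = z j} := by
  induction p using MvPolynomial.induction_on with
  | C c => simp
  | add p q hp hq =>
    simp only [map_add]
    rw [add_sub_add_comm]; exact Ideal.add_mem _ hp hq
  | mul_X p j hp =>
    simp only [map_mul, constantCoeff_X, mul_zero, map_zero, sub_zero, aeval_X]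
    exact Ideal.mul_mem_left _ _ (Ideal.subset_span ⟨j, rfl⟩)

lemma finrank_quot {G : Type*} [Fintype G] (z : Fin d → R) (b : G → N)
    (hs : Function.Surjective (PhiMap z b)) (hi : ∀ p, PhiMap z b p = 0 → p = 0) :
    Module.finrank ℂ (N ⧸ (Ideal.span {r | ∃ j, r = z j} • (⊤ : Submodule R N))) =
      Fintype.card G := by
  classical
  let e : (G → MvPolynomial (Fin d) ℂ) ≃ₗ[ℂ] N := LinearEquiv.ofBijective (PhiMap z b)
    ⟨LinearMap.ker_eq_bot.1 (LinearMap.ker_eq_bot'.2 hi), hs⟩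
  have he : ∀ p, e p = PhiMap z b p := fun p => rfl
  let cc : (G → MvPolynomial (Fin d) ℂ) →ₗ[ℂ] (G → ℂ) :=
    { toFun := fun p γ => constantCoeff (p γ)
      map_add' := by intro p q; ext; simp
      map_smul' := by intro c p; ext; simp [smul_eq_C_mul] }
  let T : N →ₗ[ℂ] (G → ℂ) := cc.comp e.symm.toLinearMap
  have hT : ∀ p γ, T (PhiMap z b p) γ = constantCoeff (p γ) := by
    intro p γ
    rw [← he]
    change cc (e.symm (e p)) γ = _
    rw [LinearEquiv.symm_apply_apply]; rfl
  have hTs : Function.Surjective T := by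
    intro c
    refine ⟨PhiMap z b (fun γ => C (c γ)), ?_⟩
    ext γ; rw [hT]; simp
  set I := Ideal.span {r | ∃ j, r = z j} with hI
  have hker : LinearMap.ker T = (I • (⊤ : Submodule R N)).restrictScalars ℂ := by
    apply le_antisymm
    · intro n hn
      rw [LinearMap.mem_ker] at hn
      obtain ⟨p, rfl⟩ := hs n
      rw [Submodule.restrictScalars_mem, PhiMap_apply]
      refine Submodule.sum_mem _ fun γ _ => Submodule.smul_mem_smul ?_ trivial
      have h1 := aeval_sub_const_mem z (p γ)
      rw [← hT, hn] at h1
      simpa using h1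
    · intro n hn
      rw [Submodule.restrictScalars_mem] at hn
      refine Submodule.smul_induction_on hn ?_ ?_
      · intro r hr n _
        revert n
        refine Submodule.span_induction (p := fun r _ => ∀ n : N, n ∈ (⊤ : Submodule R N) →
          r • n ∈ LinearMap.ker T) ?_ ?_ ?_ ?_ hr
        · rintro _ ⟨j, rfl⟩ n _
          obtain ⟨p, rfl⟩ := hs n
          rw [PhiMap_X, LinearMap.mem_ker]
          ext γ; rw [hT]; simp
        · intro n _; rw [zero_smul]; exact Submodule.zero_mem _
        · intro x y _ _ hx hy n h
          rw [add_smul]; exact Submodule.add_mem _ (hx n h) (hy n h)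
        · intro a x _ hx n _
          rw [smul_eq_mul, mul_comm, mul_smul]; exact hx _ trivial
      · intro x y hx hy; exact Submodule.add_mem _ hx hy
  have e1 := Submodule.Quotient.restrictScalarsEquiv ℂ (I • (⊤ : Submodule R N))
  rw [← e1.finrank_eq, ← hker, (T.quotKerEquivOfSurjective hTs).finrank_eq]
  simp

theorem abstract_count {P : Type*} (e : Module.Basis P ℂ N) (x : Fin k → R) (z : Fin d → R)
    (a : Fin d → Fin k → ℂ) (hz : ∀ j, z j = ∑ i, a j i • x i)
    (cone : P → Finset (Fin k)) (rk : Finset (Fin k) → ℕ) (m : P → (Fin k →₀ ℕ)) (γ : P → P)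
    (hD : ∀ w, ∃ D : Fin k → Fin d → ℂ,
      (∀ i ∈ cone w, ∀ l ∈ cone w, ∑ j, D i j * a j l = if l = i then 1 else 0) ∧
      (∀ j l, ∑ i ∈ cone w, a j i * D i l = if l = j then 1 else 0))
    (F1 : ∀ w, ∀ i ∈ cone w, ∃ w', x i • e w = e w' ∧ cone w' = cone w ∧ γ w' = γ w ∧
      m w' = Finsupp.single i 1 + m w)
    (F2 : ∀ w i, i ∉ cone w → x i • e w = 0 ∨
      ∃ w', x i • e w = e w' ∧ rk (cone w') < rk (cone w))
    (F3 : ∀ w, m w = 0 → γ w = w)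
    (F4 : ∀ w, m w ≠ 0 → ∃ i ∈ cone w, ∃ w', x i • e w' = e w ∧ cone w' = cone w ∧
      (m w').degree < (m w).degree)
    [Fintype {w // m w = 0}] :
    Module.finrank ℂ (N ⧸ (Ideal.span {r | ∃ j, r = z j} • (⊤ : Submodule R N))) =
      Fintype.card {w // m w = 0} := by
  classical
  apply finrank_quot z (fun g : {w // m w = 0} => e g.1)
  · rw [← LinearMap.range_eq_top, eq_top_iff, ← e.span_eq, Submodule.span_le]
    set W := LinearMap.range (PhiMap z (fun g : {w // m w = 0} => e g.1)) with hW
    have hWz : ∀ j, ∀ u ∈ W, z j • u ∈ W := by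
      rintro j _ ⟨p, rfl⟩
      rw [PhiMap_X]; exact ⟨_, rfl⟩
    suffices H : ∀ r t : ℕ, ∀ w, rk (cone w) = r → (m w).degree = t → e w ∈ W by
      rintro _ ⟨w, rfl⟩; exact H _ _ w rfl rfl
    intro r
    induction r using Nat.strong_induction_on with
    | _ r ihr =>
    intro t
    induction t using Nat.strong_induction_on with
    | _ t iht =>
    intro w hr ht
    by_cases h0 : m w = 0
    · refine ⟨Pi.single ⟨w, h0⟩ 1, ?_⟩
      rw [PhiMap_apply, Finset.sum_eq_single ⟨w, h0⟩]
      · simp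
      · intro b _ hb; simp [Pi.single_eq_of_ne hb]
      · simp
    · obtain ⟨i, hi, w', h1, h2, h3⟩ := F4 w h0
      obtain ⟨D, hD1, -⟩ := hD w
      have hw' : e w' ∈ W := iht _ (ht ▸ h3) w' (h2 ▸ hr) rfl
      have h4 : ∑ j, D i j • (z j • e w') ∈ W :=
        Submodule.sum_mem _ fun j _ => Submodule.smul_mem _ _ (hWz j _ hw')
      have h5 : ∑ j, D i j • (z j • e w') = ∑ l, (∑ j, D i j * a j l) • (x l • e w') := by
        simp only [hz, Finset.sum_smul, Finset.smul_sum]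
        rw [Finset.sum_comm]
        refine Finset.sum_congr rfl fun l _ => Finset.sum_congr rfl fun j _ => ?_
        rw [smul_assoc, smul_smul]
      rw [h5, ← Finset.sum_add_sum_compl (cone w)] at h4
      have h6 : ∑ l ∈ cone w, (∑ j, D i j * a j l) • (x l • e w') = e w := by
        rw [Finset.sum_eq_single i]
        · rw [hD1 i hi i hi, if_pos rfl, one_smul, h1]
        · intro l hl hne; rw [hD1 i hi l hl, if_neg hne, zero_smul]
        · intro h; exact absurd hi h
      have h7 : ∑ l ∈ (cone w)ᶜ, (∑ j, D i j * a j l) • (x l • e w') ∈ W := by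
        refine Submodule.sum_mem _ fun l hl => Submodule.smul_mem _ _ ?_
        rw [Finset.mem_compl, ← h2] at hl
        rcases F2 w' l hl with h | ⟨w'', h8, h9⟩
        · rw [h]; exact Submodule.zero_mem _
        · rw [h8]
          exact ihr _ (by rw [← hr, ← h2]; exact h9) _ w'' rfl rfl
      rw [h6] at h4
      exact (Submodule.add_mem_iff_left _ h7).1 h4
  · intro p hp
    by_contra hne
    have hex : (Finset.univ.filter (fun g => p g ≠ 0)).Nonempty := by
      by_contra hn
      rw [Finset.not_nonempty_iff_eq_empty, Finset.filter_eq_empty_iff] at hn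
      apply hne
      ext1 g
      have := hn (Finset.mem_univ g)
      push Not at this
      exact this
    obtain ⟨g0, hg0, hmax⟩ := Finset.exists_max_image _ (fun g => rk (cone g.1)) hex
    simp only [Finset.mem_filter, Finset.mem_univ, true_and] at hg0 hmax
    set c := cone g0.1 with hc
    obtain ⟨D, -, hD2⟩ := hD g0.1
    let π : N →ₗ[ℂ] (P →₀ MvPolynomial (Fin k) ℂ) := e.constr ℂ (fun w =>
      if cone w = c then Finsupp.single (γ w) (monomial (m w) 1) else 0)
    have hπ : ∀ w, π (e w) = if cone w = c then Finsupp.single (γ w) (monomial (m w) 1) else 0 :=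
      fun w => by simp only [π, Module.Basis.constr_basis]
    let s : Fin d → MvPolynomial (Fin k) ℂ := fun j => ∑ i ∈ c, C (a j i) * X i
    let Nc : Submodule ℂ N := Submodule.span ℂ {u | ∃ w, rk (cone w) ≤ rk c ∧ u = e w}
    -- action of `x i` on basis vectors
    have hx : ∀ w, rk (cone w) ≤ rk c → ∀ i, x i • e w ∈ Nc ∧
        π (x i • e w) = if i ∈ c then (X i : MvPolynomial (Fin k) ℂ) • π (e w) else 0 := by
      intro w hw i
      by_cases hi : i ∈ cone w
      · obtain ⟨w', h1, h2, h3, h4⟩ := F1 w i hi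
        rw [h1]
        refine ⟨Submodule.subset_span ⟨w', by rw [h2]; exact hw, rfl⟩, ?_⟩
        rw [hπ, hπ, h2, h3, h4]
        by_cases hcw : cone w = c
        · rw [hcw] at hi
          rw [if_pos hcw, if_pos hcw, if_pos hi, Finsupp.smul_single]
          congr 1
          rw [smul_eq_mul, X, monomial_mul, one_mul]
        · simp [hcw]
      · have hif : (if i ∈ c then (X i : MvPolynomial (Fin k) ℂ) • π (e w) else 0) = 0 := by
          by_cases hcw : cone w = c
          · rw [hcw] at hi; rw [if_neg hi]
          · rw [hπ, if_neg hcw]; simp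
        rw [hif]
        rcases F2 w i hi with h | ⟨w', h1, h2⟩
        · rw [h, map_zero]; exact ⟨Submodule.zero_mem _, rfl⟩
        · rw [h1]
          refine ⟨Submodule.subset_span ⟨w', (h2.trans_le hw).le, rfl⟩, ?_⟩
          rw [hπ, if_neg]
          intro h3
          rw [h3] at h2
          omega
    have hzj : ∀ j, ∀ u ∈ Nc, z j • u ∈ Nc ∧ π (z j • u) = s j • π u := by
      intro j u hu
      refine Submodule.span_induction (p := fun u _ => z j • u ∈ Nc ∧ π (z j • u) = s j • π u)
        ?_ ?_ ?_ ?_ hu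
      · rintro _ ⟨w, hw, rfl⟩
        have h1 : z j • e w = ∑ i, a j i • (x i • e w) := by
          rw [hz, Finset.sum_smul]; simp only [smul_assoc]
        rw [h1]
        refine ⟨Submodule.sum_mem _ fun i _ => Submodule.smul_mem _ _ (hx w hw i).1, ?_⟩
        rw [map_sum]
        simp only [map_smul, (hx w hw _).2, s, Finset.sum_smul]
        rw [← Finset.sum_subset (Finset.subset_univ c)]
        · refine Finset.sum_congr rfl fun i hi => ?_
          rw [if_pos hi, mul_smul, ← algebraMap_eq, algebraMap_smul]
        · intro i _ hi; rw [if_neg hi, smul_zero]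
      · simp
      · intro x y _ _ hx hy
        simp only [smul_add, map_add]
        exact ⟨Submodule.add_mem _ hx.1 hy.1, by rw [hx.2, hy.2]⟩
      · intro t x _ hx
        have h1 : z j • t • x = t • z j • x := by
          rw [← algebraMap_smul R t x, ← algebraMap_smul R t (z j • x), smul_smul, smul_smul,
            mul_comm]
        rw [h1]
        refine ⟨Submodule.smul_mem _ _ hx.1, ?_⟩
        rw [LinearMap.map_smul, LinearMap.map_smul, hx.2]
        exact smul_comm _ _ _
    have hpol : ∀ f : MvPolynomial (Fin d) ℂ, ∀ u ∈ Nc, aeval z f • u ∈ Nc ∧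
        π (aeval z f • u) = aeval s f • π u := by
      intro f
      induction f using MvPolynomial.induction_on with
      | C t =>
        intro u hu
        rw [aeval_C, aeval_C, algebraMap_smul, algebraMap_smul, map_smul]
        exact ⟨Submodule.smul_mem _ _ hu, rfl⟩
      | add f g hf hg =>
        intro u hu
        simp only [map_add, add_smul]
        exact ⟨Submodule.add_mem _ (hf u hu).1 (hg u hu).1, by rw [(hf u hu).2, (hg u hu).2]⟩
      | mul_X f j hf =>
        intro u hu
        simp only [map_mul, aeval_X, mul_smul]
        obtain ⟨h1, h2⟩ := hzj j u hu
        obtain ⟨h3, h4⟩ := hf _ h1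
        exact ⟨h3, by rw [h4, h2]⟩
    have h1 : π (PhiMap z (fun g : {w // m w = 0} => e g.1) p) g0.1 = aeval s (p g0) := by
      rw [PhiMap_apply, map_sum, Finsupp.finsetSum_apply]
      have h2 : ∀ g : {w // m w = 0}, π (aeval z (p g) • e g.1) =
          aeval s (p g) • (if cone g.1 = c then Finsupp.single g.1 1 else 0) := by
        intro g
        by_cases h3 : p g = 0
        · simp [h3]
        · rw [(hpol (p g) (e g.1) (Submodule.subset_span ⟨g.1, hmax g h3, rfl⟩)).2, hπ,
            F3 g.1 g.2, g.2]
          rfl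
      rw [Finset.sum_eq_single g0]
      · rw [h2, if_pos hc.symm]; simp
      · intro g _ hg
        have : g.1 ≠ g0.1 := fun h => hg (Subtype.ext h)
        rw [h2]
        split_ifs
        · simp [Finsupp.single_apply, this]
        · simp
      · simp
    rw [hp, map_zero, Finsupp.zero_apply] at h1
    let t : Fin k → MvPolynomial (Fin d) ℂ := fun i => ∑ l, C (D i l) * X l
    have h2 : (aeval t).comp (aeval s) = AlgHom.id ℂ (MvPolynomial (Fin d) ℂ) := by
      apply MvPolynomial.algHom_ext
      intro j
      rw [AlgHom.comp_apply, aeval_X]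
      simp only [s, map_sum, map_mul, aeval_X, aeval_C, t, algebraMap_eq, Finset.mul_sum,
        AlgHom.id_apply]
      rw [Finset.sum_comm]
      have h3 : ∀ l, ∑ i ∈ c, C (a j i) * (C (D i l) * X l) =
          C (σ := Fin d) (if l = j then (1 : ℂ) else 0) * X l := by
        intro l
        rw [← hD2 j l, map_sum, Finset.sum_mul]
        refine Finset.sum_congr rfl fun i _ => ?_
        rw [map_mul, mul_assoc]
      simp only [h3]
      rw [Finset.sum_eq_single j]
      · simp
      · intro l _ hl; simp [hl]
      · simp
    have h3 := DFunLike.congr_fun h2 (p g0)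
    rw [AlgHom.comp_apply, ← h1, map_zero] at h3
    exact hg0 h3.symm

end abstractAlgebra

end GKZpaper

namespace GKZpaper

section latticeCount

variable {d k : ℕ}

open Classical in
/-- Floor, or ceiling minus one, depending on the sign of `s`. -/
noncomputable def fl (s c : ℝ) : ℤ := if 0 < s then ⌊c⌋ else ⌈c⌉ - 1

lemma fl_add (s c : ℝ) (m : ℤ) : fl s (c + m) = fl s c + m := by
  unfold fl
  split_ifs
  · simp
  · simp; ring

lemma fl_nonneg (s c : ℝ) : 0 ≤ fl s c ↔ (0 ≤ c ∧ (c = 0 → 0 < s)) := by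
  unfold fl
  split_ifs with h
  · rw [Int.floor_nonneg]; simp [h]
  · constructor
    · intro h1
      have : 0 < ⌈c⌉ := by omega
      rw [Int.ceil_pos] at this
      exact ⟨this.le, fun h2 => absurd h2 this.ne'⟩
    · rintro ⟨h1, h2⟩
      have h3 : 0 < c := lt_of_le_of_ne h1 fun h3 => h (h2 h3.symm)
      have := Int.ceil_pos.2 h3
      omega

lemma HO_iff (F : StackyFan d k) (q : Fin d → ℝ) (I : Finset (Fin k)) (x : Fin d → ℝ) :
    HO F q I x ↔ IsFull F I ∧ ∀ i ∈ I, 0 ≤ fl (crd F I q i) (crd F I x i) := by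
  simp only [HO, fl_nonneg]

lemma intPt_sum (F : StackyFan d k) (m : Fin k → ℤ) :
    intPt (∑ i, m i • F.v i) = combL F (fun i => (m i : ℝ)) := by
  ext j
  rw [combL_apply]
  simp [intPt, Finset.sum_apply]

lemma crd_shift {F : StackyFan d k} {I : Finset (Fin k)} (h : IsFull F I) (χ : Fin d → ℝ)
    (n : Fin d → ℤ) (m : Fin k → ℤ) (hm : ∀ i, i ∉ I → m i = 0) (i : Fin k) :
    crd F I (pt χ (∑ i, m i • F.v i + n)) i = crd F I (pt χ n) i + m i := by
  rw [pt_add, map_add, intPt_sum, crd_eq h (c := fun i => (m i : ℝ)) _ rfl, Pi.add_apply, add_comm]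
  intro i hi; simp [hm i hi]

/-- The matrix of generators of a full cone. -/
noncomputable def Vmat (F : StackyFan d k) {I : Finset (Fin k)} (h : IsFull F I) :
    Matrix (Fin d) (Fin d) ℤ := fun a => F.v (I.orderEmbOfFin h.2 a)

open Classical in
/-- Index of the sublattice generated by a full cone. -/
noncomputable def idx (F : StackyFan d k) (I : Finset (Fin k)) : ℕ :=
  if h : IsFull F I then (Vmat F h).det.natAbs else 0

/-- Full cones. -/
noncomputable def fullC (F : StackyFan d k) : Finset (Finset (Fin k)) :=
  F.cones.filter (fun I => I.card = d)

lemma mem_fullC (F : StackyFan d k) (I : Finset (Fin k)) : I ∈ fullC F ↔ IsFull F I := by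
  simp [fullC, IsFull]

lemma Vmat_indep_real {F : StackyFan d k} {I : Finset (Fin k)} (h : IsFull F I) :
    LinearIndependent ℝ (fun a => intPt (Vmat F h a)) := by
  have := F.simplicial I h.1
  exact this.comp (fun a => ⟨I.orderEmbOfFin h.2 a, Finset.orderEmbOfFin_mem _ _ _⟩)
    (fun a b hab => (I.orderEmbOfFin h.2).injective (congrArg Subtype.val hab))

lemma Vmat_indep {F : StackyFan d k} {I : Finset (Fin k)} (h : IsFull F I) :
    LinearIndependent ℤ (Vmat F h) := by
  have h1 := (Vmat_indep_real h).restrict_scalars (R := ℤ) (by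
    intro a b; simp)
  exact LinearIndependent.of_comp (intPtL d) h1

/-- The sublattice generated by a full cone. -/
noncomputable def latI (F : StackyFan d k) {I : Finset (Fin k)} (h : IsFull F I) :
    Submodule ℤ (Fin d → ℤ) := Submodule.span ℤ (Set.range (Vmat F h))

lemma card_latI {F : StackyFan d k} {I : Finset (Fin k)} (h : IsFull F I) :
    Nat.card ((Fin d → ℤ) ⧸ latI F h) = idx F I := by
  have := Submodule.natAbs_det_basis_change (Pi.basisFun ℤ (Fin d)) (latI F h)
    (Module.Basis.span (Vmat_indep h))
  rw [← this, idx, dif_pos h, Pi.basisFun_det]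
  congr 1
  change _ = Matrix.det _
  congr 1
  ext a j
  exact congrFun (congrArg Subtype.val (Module.Basis.span_apply (Vmat_indep h) a)) j

lemma Vmat_det_ne {F : StackyFan d k} {I : Finset (Fin k)} (h : IsFull F I) :
    (Vmat F h).det ≠ 0 := by
  intro h0
  obtain ⟨w, hw, h1⟩ := Matrix.exists_vecMul_eq_zero_iff.2 h0
  apply hw
  have h2 := Fintype.linearIndependent_iff.1 (Vmat_indep h) w ?_
  · ext a; exact h2 a
  · rw [← h1]
    ext j
    simp [Matrix.vecMul, dotProduct]

lemma mem_latI {F : StackyFan d k} {I : Finset (Fin k)} (h : IsFull F I) (x : Fin d → ℤ) :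
    x ∈ latI F h ↔ ∃ m : Fin k → ℤ, (∀ i, i ∉ I → m i = 0) ∧ x = ∑ i, m i • F.v i := by
  constructor
  · intro hx
    refine Submodule.span_induction (p := fun x _ => ∃ m : Fin k → ℤ, (∀ i, i ∉ I → m i = 0) ∧
      x = ∑ i, m i • F.v i) ?_ ?_ ?_ ?_ hx
    · rintro _ ⟨a, rfl⟩
      refine ⟨Pi.single (I.orderEmbOfFin h.2 a) 1, fun i hi => ?_, ?_⟩
      · have : i ≠ I.orderEmbOfFin h.2 a := fun e => hi (e ▸ Finset.orderEmbOfFin_mem _ _ _)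
        simp [this]
      · rw [Finset.sum_eq_single (I.orderEmbOfFin h.2 a)]
        · simp [Vmat]
        · intro b _ hb; simp [hb]
        · simp
    · exact ⟨0, fun _ _ => rfl, by simp⟩
    · rintro _ _ _ _ ⟨m, h1, rfl⟩ ⟨m', h2, rfl⟩
      exact ⟨m + m', fun i hi => by simp [h1 i hi, h2 i hi],
        by simp [add_smul, Finset.sum_add_distrib]⟩
    · rintro t _ _ ⟨m, h1, rfl⟩
      exact ⟨t • m, fun i hi => by simp [h1 i hi], by simp [Finset.smul_sum, mul_smul]⟩
  · rintro ⟨m, h1, rfl⟩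
    refine Submodule.sum_mem _ fun i _ => ?_
    by_cases hi : i ∈ I
    · refine Submodule.smul_mem _ _ (Submodule.subset_span ?_)
      have : i ∈ Set.range (I.orderEmbOfFin h.2) := by simpa using hi
      obtain ⟨a, rfl⟩ := this
      exact ⟨a, rfl⟩
    · rw [h1 i hi, zero_smul]; exact Submodule.zero_mem _

/-- Box points of a full cone. -/
def boxI (F : StackyFan d k) (q χ : Fin d → ℝ) (I : Finset (Fin k)) : Set (Fin d → ℤ) :=
  {n | ∀ i ∈ I, fl (crd F I q i) (crd F I (pt χ n) i) = 0}

lemma boxI_bij {F : StackyFan d k} {I : Finset (Fin k)} (h : IsFull F I) (q χ : Fin d → ℝ) :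
    Function.Bijective (fun n : boxI F q χ I => Submodule.Quotient.mk (p := latI F h) n.1) := by
  classical
  constructor
  · rintro ⟨n, hn⟩ ⟨n', hn'⟩ he
    simp only at he
    rw [Submodule.Quotient.eq, mem_latI] at he
    obtain ⟨m, h1, h2⟩ := he
    have h3 : n = ∑ i, m i • F.v i + n' := by rw [← h2]; abel
    have h4 : m = 0 := by
      ext i
      by_cases hi : i ∈ I
      · have := hn i hi
        rw [h3, crd_shift h χ n' m h1, fl_add, hn' i hi] at this
        simpa using this
      · exact h1 i hi
    rw [h4] at h3
    simpa using h3
  · intro y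
    obtain ⟨n, rfl⟩ := Submodule.Quotient.mk_surjective _ y
    let m : Fin k → ℤ := fun i => if i ∈ I then - fl (crd F I q i) (crd F I (pt χ n) i) else 0
    have hm : ∀ i, i ∉ I → m i = 0 := fun i hi => if_neg hi
    refine ⟨⟨∑ i, m i • F.v i + n, fun i hi => ?_⟩, ?_⟩
    · rw [crd_shift h χ n m hm, fl_add]
      simp [m, hi]
    · rw [Submodule.Quotient.eq, mem_latI]
      exact ⟨m, hm, by simp⟩

lemma boxI_card {F : StackyFan d k} {I : Finset (Fin k)} (h : IsFull F I) (q χ : Fin d → ℝ) :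
    Nat.card (boxI F q χ I) = idx F I ∧ Finite (boxI F q χ I) := by
  have h1 := Nat.card_congr (Equiv.ofBijective _ (boxI_bij h q χ))
  rw [card_latI h] at h1
  refine ⟨h1, Nat.finite_of_card_ne_zero ?_⟩
  rw [h1, idx, dif_pos h]
  exact Int.natAbs_ne_zero.2 (Vmat_det_ne h)

/-- Inverse matrices: the pairing of a basis of the dual lattice with the rays of a full cone. -/
lemma exists_D {F : StackyFan d k} {I : Finset (Fin k)} (h : IsFull F I)
    (g : Fin d → ((Fin d → ℤ) →ₗ[ℤ] ℤ)) (hg : Submodule.span ℤ (Set.range g) = ⊤) :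
    ∃ D : Fin k → Fin d → ℂ,
      (∀ i ∈ I, ∀ l ∈ I, ∑ j, D i j * ((g j (F.v l) : ℤ) : ℂ) = if l = i then 1 else 0) ∧
      (∀ j l, ∑ i ∈ I, ((g j (F.v i) : ℤ) : ℂ) * D i l = if l = j then 1 else 0) := by
  classical
  have h1 : ∀ a : Fin d, ∃ H : Fin d → ℤ, ∑ j, H j • g j = LinearMap.proj a := by
    intro a
    have : (LinearMap.proj a : (Fin d → ℤ) →ₗ[ℤ] ℤ) ∈ Submodule.span ℤ (Set.range g) := by
      rw [hg]; trivial
    exact (Submodule.mem_span_range_iff_exists_fun ℤ).1 this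
  choose H hH using h1
  let G : Matrix (Fin d) (Fin d) ℤ := fun j a => g j (Pi.single a 1)
  have hgx : ∀ j x, g j x = ∑ a, G j a * x a := by
    intro j x
    conv_lhs => rw [pi_eq_sum_univ' x]
    simp only [map_sum, map_smul, smul_eq_mul, G]
    refine Finset.sum_congr rfl fun a _ => ?_
    rw [mul_comm]
  have hHG : (Matrix.of H) * G = 1 := by
    ext a b
    have := LinearMap.congr_fun (hH a) (Pi.single b 1)
    simp only [LinearMap.sum_apply, LinearMap.smul_apply, smul_eq_mul, LinearMap.proj_apply] at this
    rw [Matrix.mul_apply, Matrix.one_apply]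
    rw [Pi.single_apply] at this
    exact this
  have hGH : G * (Matrix.of H) = 1 := mul_eq_one_comm.1 hHG
  have hHG' : ∀ a b, ∑ j, H a j * G j b = if a = b then 1 else 0 := by
    intro a b
    have := congrFun (congrFun hHG a) b
    rwa [Matrix.mul_apply, Matrix.one_apply] at this
  have hGH' : ∀ j l, ∑ a, G j a * H a l = if j = l then 1 else 0 := by
    intro a b
    have := congrFun (congrFun hGH a) b
    rwa [Matrix.mul_apply, Matrix.one_apply] at this
  let e : Fin d → (Fin d → ℝ) := fun a => Pi.single a 1
  let D : Fin k → Fin d → ℝ := fun i j => ∑ a, crd F I (e a) i * (H a j : ℝ)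
  have hlin : ∀ (x : Fin d → ℝ) i, crd F I x i = ∑ a, x a * crd F I (e a) i := by
    intro x i
    conv_lhs => rw [pi_eq_sum_univ' x]
    simp only [map_sum, map_smul, Finset.sum_apply, Pi.smul_apply, smul_eq_mul]
    rfl
  have D1 : ∀ i ∈ I, ∀ l ∈ I, ∑ j, D i j * ((g j (F.v l) : ℤ) : ℝ) = if l = i then 1 else 0 := by
    intro i hi l hl
    have h2 : crd F I (intPt (F.v l)) i = if l = i then 1 else 0 := by
      rw [crd_v h hl, Pi.single_apply]; simp only [eq_comm]
    rw [← h2, hlin]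
    simp only [D, hgx, Finset.sum_mul_sum, Int.cast_sum, Int.cast_mul]
    have h3 : ∀ a b, ∑ j, (H a j : ℝ) * (G j b : ℝ) = if a = b then 1 else 0 := by
      intro a b; exact_mod_cast congrArg (Int.cast (R := ℝ)) (hHG' a b)
    calc ∑ j, ∑ b, ∑ a, crd F I (e b) i * (H b j : ℝ) * ((G j a : ℝ) * (F.v l a : ℝ))
        = ∑ b, ∑ a, crd F I (e b) i * (F.v l a : ℝ) * ∑ j, (H b j : ℝ) * (G j a : ℝ) := by
          simp only [Finset.mul_sum]
          rw [Finset.sum_comm]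
          refine Finset.sum_congr rfl fun b _ => ?_
          rw [Finset.sum_comm]
          refine Finset.sum_congr rfl fun a _ => ?_
          refine Finset.sum_congr rfl fun j _ => ?_
          ring
      _ = _ := by
          refine Finset.sum_congr rfl fun b _ => ?_
          simp only [h3]
          simp [intPt, mul_comm]
  have D2 : ∀ j l, ∑ i ∈ I, ((g j (F.v i) : ℤ) : ℝ) * D i l = if l = j then 1 else 0 := by
    intro j l
    have h2 : ∀ a b, ∑ i ∈ I, crd F I (e a) i * (F.v i b : ℝ) = if a = b then 1 else 0 := by
      intro a b
      have h3 := congrFun (comb_crd h (e a)) b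
      rw [combL_apply] at h3
      rw [Finset.sum_subset (Finset.subset_univ I), h3]
      · simp [e, Pi.single_apply, eq_comm]
      · intro i _ hi; rw [crd_off h _ hi, zero_mul]
    have h3 : ∀ a b, ∑ j, (G a j : ℝ) * (H j b : ℝ) = if a = b then 1 else 0 := by
      intro a b; exact_mod_cast congrArg (Int.cast (R := ℝ)) (hGH' a b)
    simp only [D, hgx, Finset.sum_mul, Int.cast_sum, Finset.mul_sum, Int.cast_mul]
    calc ∑ i ∈ I, ∑ a, ∑ b, (G j b : ℝ) * (F.v i b : ℝ) * (crd F I (e a) i * (H a l : ℝ))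
        = ∑ a, ∑ b, (G j b : ℝ) * (H a l : ℝ) * ∑ i ∈ I, crd F I (e a) i * (F.v i b : ℝ) := by
          rw [Finset.sum_comm]
          refine Finset.sum_congr rfl fun a _ => ?_
          rw [Finset.sum_comm]
          refine Finset.sum_congr rfl fun b _ => ?_
          rw [Finset.mul_sum]
          refine Finset.sum_congr rfl fun i _ => ?_
          ring
      _ = ∑ a, (G j a : ℝ) * (H a l : ℝ) := by
          refine Finset.sum_congr rfl fun a _ => ?_
          simp only [h2]
          simp
      _ = _ := by rw [h3]; simp only [eq_comm]
  refine ⟨fun i j => (D i j : ℂ), ?_, ?_⟩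
  · intro i hi l hl
    have := congrArg (Complex.ofReal) (D1 i hi l hl)
    push_cast at this
    rw [this]; split_ifs <;> simp
  · intro j l
    have := congrArg (Complex.ofReal) (D2 j l)
    push_cast at this
    rw [this]; split_ifs <;> simp

end latticeCount

end GKZpaper

namespace GKZpaper

section shadowCount

variable {d k : ℕ}

/-- Index set of the basis of the shadow module. -/
abbrev ShP (S : GKZSetting d k) (χ ξ : Fin d → ℝ) := {w : ↥(Ppts S.F.v χ) // tang S.F ξ (pt χ w)}

lemma exists_shadow_basis (S : GKZSetting d k) (χ ξ : Fin d → ℝ) :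
    ∃ e : Module.Basis (ShP S χ ξ) ℂ ↥(ShadowSub S.F χ ξ), ∀ w, (e w : Mmod S.F χ) = Mgen S.F χ w.1 := by
  have hmem : ∀ w : ShP S χ ξ, Mgen S.F χ w.1 ∈ ShadowSub S.F χ ξ := fun w =>
    Submodule.subset_span ⟨w.1, (shadow_iff S χ ξ w.1).2 w.2, rfl⟩
  let b : ShP S χ ξ → ↥(ShadowSub S.F χ ξ) := fun w => ⟨Mgen S.F χ w.1, hmem w⟩
  let ι : ↥(ShadowSub S.F χ ξ) →ₗ[ℂ] Mmod S.F χ := (ShadowSub S.F χ ξ).subtype.restrictScalars ℂ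
  have hι : ∀ x, ι x = x.1 := fun _ => rfl
  have hli : LinearIndependent ℂ b := by
    apply LinearIndependent.of_comp ι
    exact (M_indep S χ).comp (fun w : ShP S χ ξ => w.1) Subtype.val_injective
  have hsp : ⊤ ≤ Submodule.span ℂ (Set.range b) := by
    rintro ⟨x, hx⟩ -
    have h1 : x ∈ (ShadowSub S.F χ ξ).restrictScalars ℂ := hx
    rw [shadow_span] at h1
    have h2 : Submodule.map ι (Submodule.span ℂ (Set.range b)) =
        Submodule.span ℂ {x | ∃ w : ↥(Ppts S.F.v χ), tang S.F ξ (pt χ w) ∧ x = Mgen S.F χ w} := by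
      rw [Submodule.map_span]
      congr 1
      ext y
      constructor
      · rintro ⟨_, ⟨w, rfl⟩, rfl⟩; exact ⟨w.1, w.2, rfl⟩
      · rintro ⟨w, hw, rfl⟩; exact ⟨_, ⟨⟨w, hw⟩, rfl⟩, rfl⟩
    rw [← h2] at h1
    obtain ⟨y, hy, hyx⟩ := h1
    have : y = ⟨x, hx⟩ := Subtype.ext hyx
    rwa [← this]
  exact ⟨Module.Basis.mk hli hsp, fun w => by rw [Module.Basis.mk_apply]⟩

theorem shadow_count (S : GKZSetting d k) (g : Fin d → ((Fin d → ℤ) →ₗ[ℤ] ℤ))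
    (hg : Submodule.span ℤ (Set.range g) = ⊤) (χ ξ : Fin d → ℝ) :
    Module.finrank ℂ (↥(ShadowSub S.F χ ξ) ⧸
      (Zideal S.F g • (⊤ : Submodule (Rring S.F) ↥(ShadowSub S.F χ ξ)))) =
    ∑ I ∈ fullC S.F, idx S.F I := by
  classical
  obtain ⟨q, -, hq⟩ := exists_q S ξ
  obtain ⟨rk, hrk⟩ := exists_rank S q
  obtain ⟨e, he⟩ := exists_shadow_basis S χ ξ
  have hv0 : ∀ i, S.F.v i ≠ 0 := by
    intro i h
    have := S.hdeg i
    rw [h, map_zero] at this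
    exact absurd this (by norm_num)
  -- constructing points of the index set
  have hmk : ∀ (n : Fin d → ℤ) I, HO S.F q I (pt χ n) → ∃ w : ShP S χ ξ, (w.1 : Fin d → ℤ) = n := by
    intro n I h
    have ht := (hq _).2 ⟨I, h⟩
    exact ⟨⟨⟨n, ht.1⟩, ht⟩, rfl⟩
  have hext : ∀ w w' : ShP S χ ξ, (w.1 : Fin d → ℤ) = w'.1 → w = w' := fun w w' h =>
    Subtype.ext (Subtype.ext h)
  have hex : ∀ w : ShP S χ ξ, ∃ I, HO S.F q I (pt χ w.1) := fun w => (hq _).1 w.2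
  choose cone hcone using hex
  have hfull : ∀ w, IsFull S.F (cone w) := fun w => (hcone w).1
  have huniq : ∀ w I, HO S.F q I (pt χ w.1) → cone w = I := fun w I h => (hcone w).unique h
  let f : ShP S χ ξ → Fin k → ℤ := fun w i => if i ∈ cone w then
    fl (crd S.F (cone w) q i) (crd S.F (cone w) (pt χ w.1) i) else 0
  have hf0 : ∀ w i, 0 ≤ f w i := by
    intro w i
    by_cases hi : i ∈ cone w
    · simp only [f, if_pos hi]; exact ((HO_iff _ _ _ _).1 (hcone w)).2 i hi
    · simp [f, hi]
  have hfo : ∀ w i, i ∉ cone w → f w i = 0 := fun w i hi => if_neg hi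
  let m : ShP S χ ξ → (Fin k →₀ ℕ) := fun w => Finsupp.equivFunOnFinite.symm (fun i => (f w i).toNat)
  have hm : ∀ w i, ((m w i : ℕ) : ℤ) = f w i := by
    intro w i
    simp only [m, Finsupp.equivFunOnFinite_symm_apply_apply]
    exact Int.toNat_of_nonneg (hf0 w i)
  -- moving inside a cone
  have hmove : ∀ (w : ShP S χ ξ) (u : Fin k → ℤ), (∀ i, i ∉ cone w → u i = 0) →
      (∀ i, 0 ≤ f w i + u i) → ∃ w' : ShP S χ ξ, (w'.1 : Fin d → ℤ) = ∑ i, u i • S.F.v i + w.1 ∧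
        cone w' = cone w ∧ ∀ i, f w' i = f w i + u i := by
    intro w u hu hpos
    have h1 : ∀ i ∈ cone w, fl (crd S.F (cone w) q i)
        (crd S.F (cone w) (pt χ (∑ i, u i • S.F.v i + w.1)) i) = f w i + u i := by
      intro i hi
      rw [crd_shift (hfull w) χ _ u hu, fl_add]
      simp only [f, if_pos hi]
    have h2 : HO S.F q (cone w) (pt χ (∑ i, u i • S.F.v i + w.1)) := by
      rw [HO_iff]
      refine ⟨hfull w, fun i hi => ?_⟩
      rw [h1 i hi]; exact hpos i
    obtain ⟨w', hw'⟩ := hmk _ _ h2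
    rw [← hw'] at h1 h2
    have h3 := huniq w' _ h2
    refine ⟨w', hw', h3, fun i => ?_⟩
    by_cases hi : i ∈ cone w
    · rw [← h1 i hi, ← h3]
      simp only [f]
      rw [if_pos (h3 ▸ hi)]
    · rw [hfo w' i (h3 ▸ hi), hfo w i hi, hu i hi]; rfl
  have hγ : ∀ w, ∃ w' : ShP S χ ξ, (w'.1 : Fin d → ℤ) = ∑ i, (- f w i) • S.F.v i + w.1 := by
    intro w
    obtain ⟨w', h, -⟩ := hmove w (fun i => - f w i) (fun i hi => by simp [hfo w i hi])
      (fun i => by simp)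
    exact ⟨w', h⟩
  choose γ hγ using hγ
  let x : Fin k → Rring S.F := fun i => if i ∈ raysIdx S.F then
    Rgen S.F ⟨S.F.v i, v_mem_latticeK S.F.v i⟩ else 0
  -- the action in coordinates
  have hact : ∀ (w w' : ShP S χ ξ) i, i ∈ raysIdx S.F →
      commonCone S.F (intPt (S.F.v i)) (pt χ w.1) → (w'.1 : Fin d → ℤ) = S.F.v i + w.1 →
      x i • e w = e w' := by
    intro w w' i hi hc hw
    apply Subtype.ext
    rw [Submodule.coe_smul, he, he]
    simp only [x, if_pos hi]
    rw [Rgen_smul_common S.F χ ⟨S.F.v i, v_mem_latticeK S.F.v i⟩ w.1 hc]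
    congr 1
    exact Subtype.ext hw.symm
  have hsing : ∀ (i : Fin k) (t : ℤ), ∑ l, (Pi.single i t : Fin k → ℤ) l • S.F.v l = t • S.F.v i := by
    intro i t
    rw [Finset.sum_eq_single i]
    · simp
    · intro b _ hb; simp [hb]
    · simp
  have hray : ∀ w, ∀ i ∈ cone w, i ∈ raysIdx S.F := fun w i hi =>
    S.F.downClosed _ (hfull w).1 _ (Finset.singleton_subset_iff.2 hi)
  have hcc : ∀ w, ∀ i ∈ cone w, commonCone S.F (intPt (S.F.v i)) (pt χ w.1) := fun w i hi =>
    ⟨cone w, (hfull w).1, v_mem_realCone S.F hi, (hcone w).mem⟩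
  have hbox : ∀ w, m w = 0 ↔ ∀ i, f w i = 0 := by
    intro w
    constructor
    · intro h i; rw [← hm, h]; rfl
    · intro h; ext i
      have := hm w i
      rw [h] at this
      simpa using this
  -- the box points
  let toBox : {w // m w = 0} → (Σ I : fullC S.F, boxI S.F q χ I.1) := fun w =>
    ⟨⟨cone w.1, (mem_fullC _ _).2 (hfull w.1)⟩, ⟨w.1.1, fun i hi => by
      have := (hbox w.1).1 w.2 i
      simp only [f, if_pos hi] at this
      exact this⟩⟩
  have hbij : Function.Bijective toBox := by
    constructor
    · intro w w' h
      apply Subtype.ext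
      apply hext
      have := congrArg (fun s : (Σ I : fullC S.F, boxI S.F q χ I.1) => (s.2 : Fin d → ℤ)) h
      exact this
    · rintro ⟨⟨I, hI⟩, ⟨n, hn⟩⟩
      have hI' := (mem_fullC _ _).1 hI
      have h1 : HO S.F q I (pt χ n) := by
        rw [HO_iff]
        exact ⟨hI', fun i hi => (hn i hi).ge⟩
      obtain ⟨w, hw⟩ := hmk n I h1
      subst hw
      have h2 := huniq w I h1
      subst h2
      refine ⟨⟨w, (hbox w).2 fun i => ?_⟩, rfl⟩
      by_cases hi : i ∈ cone w
      · simp only [f, if_pos hi]; exact hn i hi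
      · exact hfo w i hi
  have hfin : ∀ I : fullC S.F, Finite (boxI S.F q χ I.1) := fun I =>
    (boxI_card ((mem_fullC _ _).1 I.2) q χ).2
  have : Finite {w // m w = 0} := Finite.of_injective _ hbij.1
  let _ : Fintype {w // m w = 0} := Fintype.ofFinite _
  have hcard : Fintype.card {w // m w = 0} = ∑ I ∈ fullC S.F, idx S.F I := by
    rw [← Nat.card_eq_fintype_card, Nat.card_congr (Equiv.ofBijective _ hbij), Nat.card_sigma,
      ← Finset.sum_coe_sort (fullC S.F)]
    exact Finset.sum_congr rfl fun I _ => (boxI_card ((mem_fullC _ _).1 I.2) q χ).1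
  rw [← hcard]
  refine abstract_count e x (fun j => Zelt S.F (g j)) (fun j i => ((g j (S.F.v i) : ℤ) : ℂ)) ?_
    cone rk m γ (fun w => exists_D (hfull w) g hg) ?_ ?_ ?_ ?_
  · intro j
    rw [Zelt]
    refine Finset.sum_congr rfl fun i _ => ?_
    simp only [x]
    split_ifs
    · rw [Algebra.smul_def]
    · rw [smul_zero]
  · intro w i hi
    obtain ⟨w', h1, h2, h3⟩ := hmove w (Pi.single i 1)
      (fun l hl => by
        have : l ≠ i := fun e => hl (e ▸ hi)
        simp [this])
      (fun l => add_nonneg (hf0 w l) (by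
        by_cases e : l = i
        · subst e; simp
        · simp [e]))
    rw [hsing, one_smul] at h1
    refine ⟨w', hact w w' i (hray w i hi) (hcc w i hi) h1, h2, ?_, ?_⟩
    · apply hext
      rw [hγ, hγ, h1, ← add_assoc]
      congr 1
      have := hsing i 1
      rw [one_smul] at this
      rw [← this, ← Finset.sum_add_distrib]
      refine Finset.sum_congr rfl fun l _ => ?_
      rw [← add_smul, h3]
      congr 1
      ring
    · ext l
      have h4 := h3 l
      rw [← hm, ← hm] at h4
      rw [Finsupp.add_apply, Finsupp.single_apply]
      rw [Pi.single_apply] at h4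
      by_cases e : i = l
      · subst e
        simp only [if_true] at h4 ⊢
        omega
      · rw [if_neg (fun h => e h.symm)] at h4
        rw [if_neg e]
        omega
  · intro w i hi
    by_cases hr : i ∈ raysIdx S.F
    · by_cases hc : commonCone S.F (intPt (S.F.v i)) (pt χ w.1)
      · right
        have ht : tang S.F ξ (pt χ (addP S.F χ ⟨S.F.v i, v_mem_latticeK S.F.v i⟩ w.1)) := by
          have := tang_add S.F w.2 (v_mem_latticeK S.F.v i)
          change tang S.F ξ (pt χ (S.F.v i + w.1))
          rwa [pt_add]
        let w' : ShP S χ ξ := ⟨_, ht⟩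
        have hw' : (w'.1 : Fin d → ℤ) = S.F.v i + w.1 := rfl
        refine ⟨w', hact w w' i hr hc hw', ?_⟩
        obtain ⟨J, hJ, h1, h2⟩ := hc
        have h3 : intPt (S.F.v i) + pt χ w.1 ∈ realCone S.F.v (cone w') := by
          rw [← pt_add, ← hw']; exact (hcone w').mem
        have h4 := face_left S.F (hfull w').1 hJ h1 h2 h3
        have h5 := face_right S.F (hfull w').1 hJ h1 h2 h3
        have h6 := mem_of_ray S.F (hfull w').1 hr (hv0 i) h4
        exact hrk _ _ _ (hcone w) (hfull w') h5 (fun h => hi (h ▸ h6))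
      · left
        apply Subtype.ext
        rw [Submodule.coe_smul, he]
        simp only [x, if_pos hr]
        rw [Rgen_smul_not S.F χ ⟨S.F.v i, v_mem_latticeK S.F.v i⟩ w.1 hc]; rfl
    · left
      simp only [x, if_neg hr]
      exact zero_smul (Rring S.F) (e w)
  · intro w hw
    apply hext
    rw [hγ]
    simp [(hbox w).1 hw]
  · intro w hw
    have : ∃ i, f w i ≠ 0 := by
      by_contra h
      push Not at h
      exact hw ((hbox w).2 h)
    obtain ⟨i, hi⟩ := this
    have hic : i ∈ cone w := by
      by_contra h; exact hi (hfo w i h)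
    have hp := hf0 w i
    obtain ⟨w', h1, h2, h3⟩ := hmove w (Pi.single i (-1))
      (fun l hl => by
        have : l ≠ i := fun e => hl (e ▸ hic)
        simp [this])
      (fun l => by
        by_cases e : l = i
        · subst e; simp; omega
        · simp [e, hf0 w l])
    rw [hsing] at h1
    refine ⟨i, hic, w', ?_, h2, ?_⟩
    · apply hact w' w i (hray w i hic) (hcc w' i (h2 ▸ hic))
      rw [h1]; simp
    · rw [Finsupp.degree_eq_sum, Finsupp.degree_eq_sum]
      have h4 : ∀ l, m w' l ≤ m w l := by
        intro l
        have := h3 l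
        rw [← hm, ← hm] at this
        rw [Pi.single_apply] at this
        split_ifs at this <;> omega
      refine Finset.sum_lt_sum (fun l _ => h4 l) ⟨i, Finset.mem_univ _, ?_⟩
      have := h3 i
      rw [← hm, ← hm] at this
      rw [Pi.single_eq_same] at this
      omega

end shadowCount

end GKZpaper

namespace GKZpaper

section volumeCount

open MeasureTheory

variable {d k : ℕ}

/-- The corner simplex of size `r`. -/
def corner (n : ℕ) (r : ℝ) : Set (Fin n → ℝ) := {y | (∀ i, 0 ≤ y i) ∧ ∑ i, y i ≤ r}

lemma corner_integral (n : ℕ) (r : ℝ) (hr : 0 ≤ r) :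
    ∫⁻ t in Set.Icc 0 r, ENNReal.ofReal ((r - t) ^ n / n.factorial) =
      ENNReal.ofReal (r ^ (n + 1) / (n + 1).factorial) := by
  rw [← ofReal_integral_eq_lintegral_ofReal]
  · congr 1
    rw [integral_Icc_eq_integral_Ioc, ← intervalIntegral.integral_of_le hr,
      intervalIntegral.integral_div,
      intervalIntegral.integral_comp_sub_left (fun x => x ^ n) r, integral_pow]
    simp only [sub_self, sub_zero, Nat.factorial_succ]
    push_cast
    rw [zero_pow (by omega), sub_zero, div_div]
  · apply ContinuousOn.integrableOn_Icc
    fun_prop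
  · rw [Filter.EventuallyLE, ae_restrict_iff' measurableSet_Icc]
    refine Filter.Eventually.of_forall fun t ht => ?_
    have : 0 ≤ r - t := by linarith [ht.2]
    change 0 ≤ _
    positivity

lemma corner_closed (n : ℕ) (r : ℝ) : IsClosed (corner n r) := by
  unfold corner
  simp only [Set.ofPred_and, Set.ofPred_forall]
  refine IsClosed.inter (isClosed_iInter fun i => isClosed_le continuous_const (by fun_prop))
    (isClosed_le (by fun_prop) continuous_const)

lemma corner_volume (n : ℕ) : ∀ r : ℝ, 0 ≤ r →
    volume (corner n r) = ENNReal.ofReal (r ^ n / n.factorial) := by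
  induction n with
  | zero =>
    intro r hr
    have : corner 0 r = Set.univ := by
      ext y; simp [corner, hr]
    rw [this, volume_pi, Measure.pi_of_empty]; simp
  | succ n ih =>
    intro r hr
    have hmp := volume_preserving_piFinSuccAbove (fun _ : Fin (n + 1) => ℝ) 0
    let T : Set (ℝ × (Fin n → ℝ)) := {p | 0 ≤ p.1 ∧ p.2 ∈ corner n (r - p.1)}
    have hTc : IsClosed T := by
      have : T = {p : ℝ × (Fin n → ℝ) | 0 ≤ p.1} ∩ (⋂ i, {p : ℝ × (Fin n → ℝ) | 0 ≤ p.2 i}) ∩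
          {p : ℝ × (Fin n → ℝ) | ∑ i, p.2 i ≤ r - p.1} := by
        ext p; simp [T, corner, and_assoc]
      rw [this]
      refine ((isClosed_le continuous_const (by fun_prop)).inter (isClosed_iInter fun i =>
        isClosed_le continuous_const (by fun_prop))).inter (isClosed_le (by fun_prop) (by fun_prop))
    have hpre : corner (n + 1) r = (MeasurableEquiv.piFinSuccAbove (fun _ : Fin (n + 1) => ℝ) 0) ⁻¹' T := by
      ext y
      simp only [corner, T, Set.mem_ofPred_eq, Set.mem_preimage, Fin.sum_univ_succ,
        Fin.forall_fin_succ]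
      have h1 : (MeasurableEquiv.piFinSuccAbove (fun _ : Fin (n + 1) => ℝ) 0 y).1 = y 0 := rfl
      have h2 : ∀ i, (MeasurableEquiv.piFinSuccAbove (fun _ : Fin (n + 1) => ℝ) 0 y).2 i = y i.succ :=
        fun i => rfl
      simp only [h1, h2]
      constructor
      · rintro ⟨⟨h3, h4⟩, h5⟩; exact ⟨h3, h4, by linarith⟩
      · rintro ⟨h3, h4, h5⟩; exact ⟨⟨h3, h4⟩, by linarith⟩
    rw [hpre, hmp.measure_preimage hTc.measurableSet.nullMeasurableSet, Measure.volume_eq_prod,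
      Measure.prod_apply hTc.measurableSet, ← corner_integral n r hr,
      ← lintegral_indicator measurableSet_Icc]
    refine lintegral_congr fun t => ?_
    by_cases ht : t ∈ Set.Icc 0 r
    · rw [Set.indicator_of_mem ht, ← ih (r - t) (by linarith [ht.2])]
      congr 1
      ext y
      simp [T, ht.1]
    · rw [Set.indicator_of_notMem ht]
      have : Prod.mk t ⁻¹' T = ∅ := by
        ext y
        simp only [Set.mem_preimage, T, Set.mem_ofPred_eq, Set.mem_empty_iff_false, iff_false]
        rintro ⟨h1, h2, h3⟩
        apply ht
        refine ⟨h1, ?_⟩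
        have := Finset.sum_nonneg fun i (_ : i ∈ Finset.univ) => h2 i
        linarith
      rw [this, measure_empty]

/-- The real extension of the degree. -/
noncomputable def degR (S : GKZSetting d k) : (Fin d → ℝ) →ₗ[ℝ] ℝ where
  toFun x := ∑ j, x j * (S.deg (Pi.single j 1) : ℝ)
  map_add' x y := by simp [add_mul, Finset.sum_add_distrib]
  map_smul' t x := by simp [Finset.mul_sum, mul_assoc]

lemma degR_v (S : GKZSetting d k) (i : Fin k) : degR S (intPt (S.F.v i)) = 1 := by
  have h := S.hdeg i
  rw [pi_eq_sum_univ' (S.F.v i)] at h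
  simp only [map_sum, map_smul, smul_eq_mul] at h
  have := congrArg (Int.cast (R := ℝ)) h
  push_cast at this
  rw [← this]
  rfl

lemma combL_eq_sum (F : StackyFan d k) (c : Fin k → ℝ) :
    combL F c = ∑ i, c i • intPt (F.v i) := by
  ext j
  rw [combL_apply]
  simp [intPt, Finset.sum_apply]

lemma degR_combL (S : GKZSetting d k) (c : Fin k → ℝ) : degR S (combL S.F c) = ∑ i, c i := by
  rw [combL_eq_sum, map_sum]
  simp [degR_v]

/-- The simplex of a cone. -/
def simpI (S : GKZSetting d k) (I : Finset (Fin k)) : Set (Fin d → ℝ) :=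
  realCone S.F.v I ∩ {x | degR S x ≤ 1}

lemma degBody_eq (S : GKZSetting d k) : degBody S = ⋃ J ∈ S.F.cones, simpI S J := by
  ext x
  simp only [degBody, simpI, Set.mem_ofPred_eq, Set.mem_iUnion, Set.mem_inter_iff, exists_prop,
    ← S.hsupp, support]
  constructor
  · rintro ⟨⟨J, hJ, h⟩, h2⟩; exact ⟨J, hJ, h, h2⟩
  · rintro ⟨J, hJ, h, h2⟩; exact ⟨⟨J, hJ, h⟩, h2⟩

lemma null_realCone (F : StackyFan d k) {J : Finset (Fin k)} (hJ : J.card < d) :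
    volume (realCone F.v J) = 0 := by
  classical
  let W : Submodule ℝ (Fin d → ℝ) :=
    Submodule.span ℝ ((J.image (fun i => intPt (F.v i)) : Finset (Fin d → ℝ)) : Set (Fin d → ℝ))
  have h1 : realCone F.v J ⊆ W := by
    intro x hx
    rw [mem_realCone] at hx
    obtain ⟨c, _, h2, rfl⟩ := hx
    rw [combL_eq_sum]
    refine Submodule.sum_mem _ fun i _ => ?_
    by_cases hi : i ∈ J
    · exact Submodule.smul_mem _ _ (Submodule.subset_span
        (Finset.mem_coe.2 (Finset.mem_image_of_mem _ hi)))
    · rw [h2 i hi, zero_smul]; exact Submodule.zero_mem _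
  refine measure_mono_null h1 (Measure.addHaar_submodule volume W ?_)
  intro h
  have h2 := finrank_span_finset_le_card (R := ℝ) (J.image (fun i => intPt (F.v i)))
  rw [Set.finrank] at h2
  change Module.finrank ℝ W ≤ _ at h2
  rw [h, finrank_top, Module.finrank_fin_fun] at h2
  have h3 := Finset.card_image_le (s := J) (f := fun i => intPt (F.v i))
  omega

lemma simpI_image (S : GKZSetting d k) {I : Finset (Fin k)} (h : IsFull S.F I) :
    simpI S I = Matrix.toLin' ((Vmat S.F h).map (Int.cast (R := ℝ))).transpose '' corner d 1 := by
  classical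
  have hA : ∀ y : Fin d → ℝ,
      Matrix.toLin' ((Vmat S.F h).map (Int.cast (R := ℝ))).transpose y =
        ∑ a, y a • intPt (S.F.v (I.orderEmbOfFin h.2 a)) := by
    intro y
    ext j
    simp [Matrix.mulVec, dotProduct, Vmat, intPt, mul_comm]
  have hsum : ∀ {M : Type} [AddCommMonoid M] (f : Fin k → M), (∀ i, i ∉ I → f i = 0) →
      ∑ i, f i = ∑ a, f (I.orderEmbOfFin h.2 a) := by
    intro M _ f hf
    rw [← Finset.sum_subset (Finset.subset_univ I) (fun i _ hi => hf i hi)]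
    conv_lhs => rw [← Finset.map_orderEmbOfFin_univ I h.2]
    rw [Finset.sum_map]
    rfl
  ext x
  constructor
  · rintro ⟨h1, h2⟩
    rw [mem_realCone] at h1
    obtain ⟨c, h3, h4, rfl⟩ := h1
    refine ⟨fun a => c (I.orderEmbOfFin h.2 a), ⟨fun a => h3 _, ?_⟩, ?_⟩
    · rw [Set.mem_ofPred_eq, degR_combL, hsum c h4] at h2
      exact h2
    · rw [hA, combL_eq_sum, hsum _ (fun i hi => by rw [h4 i hi, zero_smul])]
  · rintro ⟨y, ⟨h1, h2⟩, rfl⟩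
    rw [hA]
    refine ⟨?_, ?_⟩
    · have : ∀ a, y a • intPt (S.F.v (I.orderEmbOfFin h.2 a)) ∈ realCone S.F.v I := by
        intro a
        have h5 := v_mem_realCone S.F (Finset.orderEmbOfFin_mem I h.2 a)
        rw [mem_realCone] at h5 ⊢
        obtain ⟨c, h6, h7, h8⟩ := h5
        exact ⟨y a • c, fun i => mul_nonneg (h1 a) (h6 i), fun i hi => by simp [h7 i hi],
          by rw [map_smul, h8]⟩
      refine Finset.sum_induction _ (fun x => x ∈ realCone S.F.v I)
        (fun x y hx hy => realCone_add S.F hx hy) ?_ (fun a _ => this a)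
      rw [mem_realCone]
      exact ⟨0, fun _ => le_rfl, fun _ _ => rfl, by simp⟩
    · rw [Set.mem_ofPred_eq, map_sum]
      simp only [map_smul, degR_v, smul_eq_mul, mul_one]
      exact h2

lemma simpI_volume (S : GKZSetting d k) {I : Finset (Fin k)} (h : IsFull S.F I) :
    volume (simpI S I) = (idx S.F I : ENNReal) * ENNReal.ofReal (1 / d.factorial) := by
  rw [simpI_image S h, Measure.addHaar_image_linearMap, LinearMap.det_toLin', Matrix.det_transpose,
    corner_volume d 1 zero_le_one, one_pow, idx, dif_pos h]
  congr 1
  have : ((Vmat S.F h).map (Int.cast (R := ℝ))).det = ((Vmat S.F h).det : ℝ) := by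
    rw [Int.cast_det]
  rw [this, ← Int.cast_abs, Int.abs_eq_natAbs, Int.cast_natCast, ENNReal.ofReal_natCast]

lemma simpI_measurable (S : GKZSetting d k) {I : Finset (Fin k)} (h : IsFull S.F I) :
    MeasurableSet (simpI S I) := by
  have : simpI S I = (⋂ i, {x | 0 ≤ crd S.F I x i}) ∩ {x | degR S x ≤ 1} := by
    ext x
    simp [simpI, mem_realCone_full h]
  rw [this]
  have h1 : Continuous (crd S.F I) := LinearMap.continuous_of_finiteDimensional _
  have h2 : Continuous (degR S) := LinearMap.continuous_of_finiteDimensional _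
  refine IsClosed.measurableSet (IsClosed.inter (isClosed_iInter fun i =>
    isClosed_le continuous_const (by fun_prop)) (isClosed_le h2 continuous_const))

theorem volume_count (S : GKZSetting d k) :
    ((∑ I ∈ fullC S.F, idx S.F I : ℕ) : ENNReal) =
      (Nat.factorial d : ENNReal) * volume (degBody S) := by
  classical
  have h1 : degBody S = (⋃ I ∈ fullC S.F, simpI S I) ∪
      ⋃ J ∈ S.F.cones.filter (fun J => J.card < d), simpI S J := by
    rw [degBody_eq]
    ext x
    simp only [Set.mem_iUnion, Set.mem_union, exists_prop, Finset.mem_filter, mem_fullC, IsFull]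
    constructor
    · rintro ⟨J, hJ, hx⟩
      rcases (card_le_of_mem S.F hJ).lt_or_eq with h | h
      · exact Or.inr ⟨J, ⟨hJ, h⟩, hx⟩
      · exact Or.inl ⟨J, ⟨hJ, h⟩, hx⟩
    · rintro (⟨J, hJ, hx⟩ | ⟨J, hJ, hx⟩)
      · exact ⟨J, hJ.1, hx⟩
      · exact ⟨J, hJ.1, hx⟩
  have h2 : volume (⋃ J ∈ S.F.cones.filter (fun J => J.card < d), simpI S J) = 0 := by
    refine measure_iUnion_null fun J => measure_iUnion_null fun hJ => ?_
    exact measure_mono_null Set.inter_subset_left (null_realCone S.F (Finset.mem_filter.1 hJ).2)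
  have h3 : volume (degBody S) = ∑ I ∈ fullC S.F, volume (simpI S I) := by
    rw [h1, measure_congr (union_ae_eq_left_of_ae_eq_empty (ae_eq_empty.2 h2)), measure_biUnion_finset₀]
    · intro I hI J hJ hne
      have hI' := (mem_fullC _ _).1 hI
      have hJ' := (mem_fullC _ _).1 hJ
      refine measure_mono_null (t := realCone S.F.v (I ∩ J)) ?_ (null_realCone S.F ?_)
      · rw [← S.F.inter _ hI'.1 _ hJ'.1]
        rintro x ⟨hx, hy⟩; exact ⟨hx.1, hy.1⟩
      · by_contra hc
        have h5 : I ∩ J = I := Finset.eq_of_subset_of_card_le Finset.inter_subset_left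
          (by rw [hI'.2]; omega)
        have h6 : I ∩ J = J := Finset.eq_of_subset_of_card_le Finset.inter_subset_right
          (by rw [hJ'.2]; omega)
        exact hne (h5.symm.trans h6)
    · intro I hI
      exact (simpI_measurable S ((mem_fullC _ _).1 hI)).nullMeasurableSet
  rw [h3, Finset.sum_congr rfl (fun I hI => simpI_volume S ((mem_fullC _ _).1 hI)),
    ← Finset.sum_mul, mul_comm, mul_assoc]
  have h4 : ENNReal.ofReal (1 / d.factorial) * (d.factorial : ENNReal) = 1 := by
    rw [← ENNReal.ofReal_natCast, ← ENNReal.ofReal_mul (by positivity),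
      one_div_mul_cancel (by positivity), ENNReal.ofReal_one]
  rw [h4, mul_one]
  push_cast
  rfl

end volumeCount

end GKZpaper

namespace GKZpaper

section transfer

variable {d k : ℕ}

lemma finrank_transfer {R M N : Type*} [CommRing R] [Algebra ℂ R] [AddCommGroup M] [Module R M]
    [Module ℂ M] [IsScalarTower ℂ R M] [AddCommGroup N] [Module R N] [Module ℂ N]
    [IsScalarTower ℂ R N] (e : M ≃ₗ[R] N) (I : Ideal R) :
    Module.finrank ℂ (M ⧸ (I • (⊤ : Submodule R M))) =
      Module.finrank ℂ (N ⧸ (I • (⊤ : Submodule R N))) := by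
  have h : (I • (⊤ : Submodule R M)).map (e : M →ₗ[R] N) = I • (⊤ : Submodule R N) := by
    rw [Submodule.map_smul'', Submodule.map_top, LinearEquiv.range]
  exact ((Submodule.Quotient.equiv _ _ e h).restrictScalars ℂ).finrank_eq

lemma M_span (F : StackyFan d k) (χ : Fin d → ℝ) :
    Submodule.span (Rring F) (Set.range (Mgen F χ)) = ⊤ := by
  rw [eq_top_iff]
  rintro x -
  obtain ⟨y, rfl⟩ := Submodule.Quotient.mk_surjective _ x
  induction y using Finsupp.induction_linear with
  | zero => exact Submodule.zero_mem _
  | add f g hf hg => rw [Submodule.Quotient.mk_add]; exact Submodule.add_mem _ hf hg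
  | single w r =>
    have : Finsupp.single w r = r • Finsupp.single w (1 : Rring F) := by
      rw [Finsupp.smul_single, smul_eq_mul, mul_one]
    rw [this, Submodule.Quotient.mk_smul]
    exact Submodule.smul_mem _ _ (Submodule.subset_span ⟨w, rfl⟩)

lemma shadow_zero (F : StackyFan d k) (χ : Fin d → ℝ) : ShadowSub F χ 0 = ⊤ := by
  rw [eq_top_iff, ← M_span, Submodule.span_le]
  rintro _ ⟨w, rfl⟩
  refine Submodule.subset_span ⟨w, ⟨⟨w, fun j => rfl⟩, w.2, 1, one_pos, fun ε _ _ => ?_⟩, rfl⟩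
  have := w.2
  simpa [Ppts] using this

lemma Ppts_zero (F : StackyFan d k) (w : ↥(Ppts F.v 0)) : (w : Fin d → ℤ) ∈ latticeK F.v := by
  have h : pt 0 (w : Fin d → ℤ) ∈ Kcone F.v := w.2
  rw [pt_zero] at h
  exact h

lemma Ppts_zero' (F : StackyFan d k) (w : ↥(latticeK F.v)) : (w : Fin d → ℤ) ∈ Ppts F.v 0 := by
  have h : intPt (w : Fin d → ℤ) ∈ Kcone F.v := w.2
  rw [← pt_zero] at h
  exact h

/-- The map `ℂ[𝚺;0] → ℂ[𝚺]`. -/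
noncomputable def toR (F : StackyFan d k) : Mmod F 0 →ₗ[Rring F] Rring F :=
  Submodule.liftQ _ (Finsupp.linearCombination (Rring F)
    (fun w : ↥(Ppts F.v 0) => Rgen F ⟨w, Ppts_zero F w⟩)) (by
    rw [Submodule.span_le]
    rintro x (⟨a, w, w', h1, h2, rfl⟩ | ⟨a, w, h1, rfl⟩)
    · have h1' : commonCone F (intPt a) (pt 0 w) := h1
      rw [pt_zero] at h1'
      rw [SetLike.mem_coe, LinearMap.mem_ker, map_sub, Finsupp.linearCombination_single,
        Finsupp.linearCombination_single, one_smul, smul_eq_mul, sub_eq_zero,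
        Rgen_mul_common F a ⟨w, Ppts_zero F w⟩ h1']
      congr 1
      exact Subtype.ext h2.symm
    · have h1' : ¬ commonCone F (intPt a) (pt 0 w) := h1
      rw [pt_zero] at h1'
      rw [SetLike.mem_coe, LinearMap.mem_ker, Finsupp.linearCombination_single, smul_eq_mul]
      exact Rgen_mul_not F a ⟨w, Ppts_zero F w⟩ h1')

lemma toR_Mgen (F : StackyFan d k) (w : ↥(Ppts F.v 0)) :
    toR F (Mgen F 0 w) = Rgen F ⟨w, Ppts_zero F w⟩ := by
  change Finsupp.linearCombination (Rring F) _ (Finsupp.single w 1) = _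
  rw [Finsupp.linearCombination_single, one_smul]

lemma exists_equivR (S : GKZSetting d k) : Nonempty (Mmod S.F 0 ≃ₗ[Rring S.F] Rring S.F) := by
  let z : ↥(Ppts S.F.v 0) := ⟨0, Ppts_zero' S.F ⟨0, zero_mem_latticeK S.F⟩⟩
  let b : Rring S.F →ₗ[Rring S.F] Mmod S.F 0 := LinearMap.toSpanSingleton _ _ (Mgen S.F 0 z)
  have hb : ∀ r, b r = r • Mgen S.F 0 z := fun r => rfl
  refine ⟨LinearEquiv.ofLinear (toR S.F) b ?_ ?_⟩
  · apply LinearMap.ext_ring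
    rw [LinearMap.comp_apply, hb, one_smul, toR_Mgen]
    exact Rgen_zero S.F
  · apply LinearMap.ext_on_range (M_span S.F 0)
    intro w
    rw [LinearMap.comp_apply, toR_Mgen, hb, Rgen_smul_common]
    · rw [LinearMap.id_apply]
      congr 1
      apply Subtype.ext
      simp [addP, z]
    · have h := commonCone_zero S (Ppts_zero S.F w)
      obtain ⟨I, hI, h1, h2⟩ := h
      refine ⟨I, hI, ?_, ?_⟩
      all_goals
        first
        | exact h1
        | exact h2
        | (rw [pt_zero]; exact h1)
        | (rw [pt_zero]; exact h2)

theorem R_count (S : GKZSetting d k) (I : Ideal (Rring S.F)) :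
    Module.finrank ℂ (Rring S.F ⧸ I) =
      Module.finrank ℂ (Mmod S.F 0 ⧸ (I • (⊤ : Submodule (Rring S.F) (Mmod S.F 0)))) := by
  obtain ⟨e⟩ := exists_equivR S
  rw [finrank_transfer e I]
  have : (I • (⊤ : Submodule (Rring S.F) (Rring S.F))) = I := by
    rw [smul_eq_mul, Ideal.mul_top]
  rw [this]

theorem M_count (S : GKZSetting d k) (χ : Fin d → ℝ) (I : Ideal (Rring S.F)) :
    Module.finrank ℂ (Mmod S.F χ ⧸ (I • (⊤ : Submodule (Rring S.F) (Mmod S.F χ)))) =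
      Module.finrank ℂ (↥(ShadowSub S.F χ 0) ⧸
        (I • (⊤ : Submodule (Rring S.F) ↥(ShadowSub S.F χ 0)))) :=
  (finrank_transfer (LinearEquiv.ofTop _ (shadow_zero S.F χ)) I).symm

end transfer

end GKZpaper

namespace GKZpaper

/-- **Corollary 4.3.** The quotients `ℂ[𝚺]/Z⬝ℂ[𝚺] = Hℂ(𝚺;0)`, `ℂ[𝚺;χ]/Z⬝ℂ[𝚺;χ] = Hℂ(𝚺;χ)`
and `ℂ[𝚺;χ]_ξ/Z⬝ℂ[𝚺;χ]_ξ` all have dimension (over `ℂ`) equal to the normalized volume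
of `Δ`. -/
theorem statement12 (S : GKZSetting d k)
    (g : Fin d → ((Fin d → ℤ) →ₗ[ℤ] ℤ))
    (hg : Submodule.span ℤ (Set.range g) = ⊤)
    (χ ξ : Fin d → ℝ) :
    ((Module.finrank ℂ (Rring S.F ⧸ Zideal S.F g) : ℝ≥0∞) =
      (Nat.factorial d : ℝ≥0∞) * MeasureTheory.volume (degBody S)) ∧
    ((Module.finrank ℂ
        (Mmod S.F χ ⧸ (Zideal S.F g • (⊤ : Submodule (Rring S.F) (Mmod S.F χ)))) : ℝ≥0∞) =
      (Nat.factorial d : ℝ≥0∞) * MeasureTheory.volume (degBody S)) ∧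
    ((Module.finrank ℂ
        (↥(ShadowSub S.F χ ξ) ⧸
          (Zideal S.F g • (⊤ : Submodule (Rring S.F) ↥(ShadowSub S.F χ ξ)))) : ℝ≥0∞) =
      (Nat.factorial d : ℝ≥0∞) * MeasureTheory.volume (degBody S)) := by
  refine ⟨?_, ?_, ?_⟩
  · rw [R_count, M_count, shadow_count S g hg, volume_count]
  · rw [M_count, shadow_count S g hg, volume_count]
  · rw [shadow_count S g hg, volume_count]

end GKZpaper
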